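/- arXiv:2006.16456 — 3 statements merged into one kernel-verified Lean document; each statement's English description precedes it below -/
import Mathlib

section
/- (Max balance II, existence) Any LD limit point ρ of the invariant measures P^n satisfies max balance: Φ_ρ(A',A'') = Φ_ρ(A'',A') for every nontrivial partition {A',A''} of A. -/
open Filter Topology Metric Set MeasureTheory
open scoped NNReal

noncomputable section

/-- A deviability density on a topological space `E`. -/
def IsDeviabilityDensity {E : Type*} [TopologicalSpace E] (p : E → ℝ) : Prop :=
  (∀ x, p x ∈ Set.Icc (0:ℝ) 1) ∧ (⨆ x, p x) = 1 ∧
    ∀ γ ∈ Set.Ioc (0:ℝ) 1, IsCompact {x | γ ≤ p x}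

variable {S : Type*} [MetricSpace S]

/-- Time shift `θ_s` on continuous paths. -/
def pshift (s : ℝ≥0) (X : C(ℝ≥0, S)) : C(ℝ≥0, S) :=
  ⟨fun t => X (s + t), X.continuous.comp (continuous_const.add continuous_id)⟩

/-- `Π_{x,t}(y)`. -/
def transDen (Px : S → C(ℝ≥0, S) → ℝ) (x : S) (t : ℝ≥0) (y : S) : ℝ :=
  ⨆ X ∈ {X : C(ℝ≥0, S) | X t = y}, Px x X

/-- The standing assumptions (2.2)--(2.5) of the paper, together with the basic
assumptions on the family of path deviability densities `Px` and the set `A`. -/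
structure DevSetup (S : Type*) [MetricSpace S] (Px : S → C(ℝ≥0, S) → ℝ) (A : Set S) :
    Prop where
  dev : ∀ x, IsDeviabilityDensity (Px x)
  start : ∀ x (X : C(ℝ≥0, S)), X 0 ≠ x → Px x X = 0
  /-- (2.2) upper semicontinuity -/
  usc : UpperSemicontinuous (fun q : S × C(ℝ≥0, S) => Px q.1 q.2)
  /-- (2.2) uniform upper compactness -/
  cpt : ∀ K : Set S, IsCompact K → ∀ γ ∈ Set.Ioc (0:ℝ) 1,
    IsCompact (⋃ x ∈ K, {X : C(ℝ≥0, S) | γ ≤ Px x X})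
  /-- (2.3) the maxitive Markov property -/
  markov : ∀ x (X : C(ℝ≥0, S)) (s : ℝ≥0),
    Px x X = (⨆ X' ∈ {X' : C(ℝ≥0, S) | ∀ u ≤ s, X' u = X u}, Px x X') *
      Px (X s) (pshift s X)
  /-- (2.4) `A` is locally finite -/
  locFin : ∀ K : Set S, IsCompact K → (K ∩ A).Finite
  /-- (2.4)(i) -/
  attract : ∀ x (X : C(ℝ≥0, S)), Px x X = 1 → (⨅ t : ℝ≥0, infDist (X t) A) = 0
  /-- (2.4)(ii) -/
  equil : ∀ a ∈ A, Px a (ContinuousMap.const ℝ≥0 a) = 1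
  /-- (2.4)(iii) -/
  connect : ∀ a ∈ A, ∀ a' ∈ A, ∃ t : ℝ≥0, 0 < t ∧ 0 < transDen Px a t a'
  /-- (2.4)(iv) -/
  nearA : ∀ ε : ℝ, 0 < ε → ∃ δ : ℝ, 0 < δ ∧ ∀ x : S, infDist x A < δ →
    ∃ s₀ s₁ : ℝ≥0, 0 < s₀ ∧ 0 < s₁ ∧ ∃ a ∈ A,
      1 - ε < transDen Px x s₀ a ∧ 1 - ε < transDen Px a s₁ x
  /-- (2.4)(v) -/
  localMove : ∀ x : S, ∀ ε : ℝ, 0 < ε → ∃ δ : ℝ, 0 < δ ∧ ∃ t₀ t₁ : ℝ≥0,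
    ∀ x' : S, dist x x' < δ →
      1 - ε < transDen Px x t₀ x' ∧ 1 - ε < transDen Px x' t₁ x
  /-- (2.5) uniform tightness -/
  tight : ∀ K₁ : Set S, IsCompact K₁ → ∀ ε : ℝ, 0 < ε → ∃ K₂ : Set S, IsCompact K₂ ∧
    Filter.limsup (fun t : ℝ≥0 => ⨆ x ∈ K₁, ⨆ y ∈ K₂ᶜ, transDen Px x t y) atTop < ε

/-- LD convergence at the given rate of a sequence of Borel probability measures to a
deviability density. -/
def LDConv {E : Type*} [TopologicalSpace E] [MeasurableSpace E]
    (Q : ℕ → Measure E) (rate : ℕ → ℕ) (p : E → ℝ) : Prop :=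
  ∀ f : E → ℝ, Continuous f → (∀ x, 0 ≤ f x) → BddAbove (Set.range f) →
    Tendsto (fun n => (∫ x, (f x) ^ (rate n) ∂(Q n)) ^ ((rate n : ℝ)⁻¹)) atTop
      (𝓝 (⨆ x, f x * p x))

variable [MeasurableSpace S] [BorelSpace S]

/-- The max flux `Φ_ρ(Γ,Γ')` relative to the limiting transition density `PL`. -/
def maxFlux (PL : S → S → ℝ) (ρ : S → ℝ) (Γ Γ' : Set S) : ℝ :=
  ⨆ x ∈ Γ, ρ x * ⨆ y ∈ Γ', PL x y

/-- `Φ_ρ(Γ, x)`, the max flux into a point. -/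
def maxFluxPt (PL : S → S → ℝ) (ρ : S → ℝ) (Γ : Set S) (x : S) : ℝ :=
  ⨆ a ∈ Γ, ρ a * PL a x


set_option linter.unusedSectionVars false

section Helpers
variable {Px : S → C(ℝ≥0, S) → ℝ} {A : Set S}

lemma bsup_le {ι : Type*} {f : ι → ℝ} {s : Set ι} {c : ℝ} (hc : 0 ≤ c) (h : ∀ i ∈ s, f i ≤ c) :
    (⨆ i ∈ s, f i) ≤ c :=
  Real.iSup_le (fun i => Real.iSup_le (fun hi => h i hi) hc) hc

lemma le_bsup {ι : Type*} {f : ι → ℝ} {s : Set ι} {B : ℝ} (hB : 0 ≤ B) (h : ∀ i ∈ s, f i ≤ B)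
    {i : ι} (hi : i ∈ s) : f i ≤ ⨆ i ∈ s, f i := by
  have h1 : BddAbove (Set.range fun i => ⨆ (_ : i ∈ s), f i) :=
    ⟨B, by rintro _ ⟨j, rfl⟩; exact Real.iSup_le (fun hj => h j hj) hB⟩
  have h2 := le_ciSup h1 i
  simpa [hi] using h2

lemma bsup_nonneg {ι : Type*} {f : ι → ℝ} {s : Set ι} (h : ∀ i ∈ s, 0 ≤ f i) :
    0 ≤ ⨆ i ∈ s, f i :=
  Real.iSup_nonneg fun i => Real.iSup_nonneg fun hi => h i hi

lemma lt_bsup {ι : Type*} {f : ι → ℝ} {s : Set ι} {c : ℝ} (hc : 0 ≤ c)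
    (h : c < ⨆ i ∈ s, f i) : ∃ i ∈ s, c < f i := by
  by_contra hcon
  push Not at hcon
  exact absurd (bsup_le hc hcon) (not_le.mpr h)

lemma bsup_mul_le {ι : Type*} {f : ι → ℝ} {s : Set ι} {b c : ℝ} (hb : 0 ≤ b) (hc : 0 ≤ c)
    (h : ∀ i ∈ s, f i * b ≤ c) : (⨆ i ∈ s, f i) * b ≤ c := by
  rcases hb.eq_or_lt with rfl | hb
  · simpa using hc
  · rw [← le_div_iff₀ hb]
    exact bsup_le (by positivity) fun i hi => (le_div_iff₀ hb).2 (h i hi)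

lemma Px_nonneg (hyp : DevSetup S Px A) (x : S) (X : C(ℝ≥0, S)) : 0 ≤ Px x X :=
  ((hyp.dev x).1 X).1

lemma Px_le_one (hyp : DevSetup S Px A) (x : S) (X : C(ℝ≥0, S)) : Px x X ≤ 1 :=
  ((hyp.dev x).1 X).2

lemma td_nonneg (hyp : DevSetup S Px A) (x : S) (t : ℝ≥0) (y : S) : 0 ≤ transDen Px x t y :=
  bsup_nonneg fun _ _ => Px_nonneg hyp _ _

lemma td_le_one (hyp : DevSetup S Px A) (x : S) (t : ℝ≥0) (y : S) : transDen Px x t y ≤ 1 :=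
  bsup_le zero_le_one fun _ _ => Px_le_one hyp _ _

lemma Px_le_td (hyp : DevSetup S Px A) (x : S) (t : ℝ≥0) (X : C(ℝ≥0, S)) :
    Px x X ≤ transDen Px x t (X t) :=
  le_bsup (f := Px x) (s := {Y : C(ℝ≥0, S) | Y t = X t}) zero_le_one (fun _ _ => Px_le_one hyp _ _) rfl

/-- decomposition of a path at time `s` -/
lemma Px_le_mul (hyp : DevSetup S Px A) (x : S) (s : ℝ≥0) (X : C(ℝ≥0, S)) :
    Px x X ≤ transDen Px x s (X s) * Px (X s) (pshift s X) := by
  rw [hyp.markov x X s]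
  refine mul_le_mul_of_nonneg_right ?_ (Px_nonneg hyp _ _)
  refine bsup_le (td_nonneg hyp _ _ _) fun Y hY => ?_
  have := Px_le_td hyp x s Y
  rwa [show Y s = X s from hY s le_rfl] at this

/-- concatenation -/
def pconcat (s : ℝ≥0) (X Y : C(ℝ≥0, S)) (h : Y 0 = X s) : C(ℝ≥0, S) :=
  ⟨fun t => if t ≤ s then X t else Y (t - s), by
    refine Continuous.if_le X.continuous (Y.continuous.comp (continuous_id.sub continuous_const))
      continuous_id continuous_const ?_
    intro t ht
    simp [ht, h]⟩

lemma td_mul_le (hyp : DevSetup S Px A) (x y z : S) (s t : ℝ≥0) :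
    transDen Px x s y * transDen Px y t z ≤ transDen Px x (s + t) z := by
  refine bsup_mul_le (td_nonneg hyp _ _ _) (td_nonneg hyp _ _ _) fun X hX => ?_
  rw [mul_comm]
  refine bsup_mul_le (Px_nonneg hyp _ _) (td_nonneg hyp _ _ _) fun Y hY => ?_
  by_cases h0 : Y 0 = y
  · have hX' : X s = y := hX
    have hY' : Y t = z := hY
    have h : Y 0 = X s := by rw [h0, hX']
    set W := pconcat s X Y h with hW
    have hWs : W s = y := by simp [hW, pconcat, hX']
    have hsh : pshift s W = Y := by
      ext u
      by_cases hu : u = 0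
      · subst hu; simp [hW, pconcat, pshift, h]
      · have : 0 < u := pos_iff_ne_zero.mpr hu
        simp [hW, pconcat, pshift, hu]
    have hWe : W (s + t) = z := by
      rw [← hY', ← hsh]; rfl
    have h1 := Px_le_td hyp x (s + t) W
    rw [hWe] at h1
    refine le_trans ?_ h1
    rw [hyp.markov x W s, hWs, hsh, mul_comm]
    refine mul_le_mul_of_nonneg_right ?_ (Px_nonneg hyp _ _)
    refine le_bsup (f := Px x) (s := {X' : C(ℝ≥0, S) | ∀ u ≤ s, X' u = W u}) zero_le_one
      (fun _ _ => Px_le_one hyp _ _) ?_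
    intro u hu
    simp [hW, pconcat, hu]
  · rw [hyp.start y Y h0, zero_mul]
    exact td_nonneg hyp _ _ _

lemma td_self (hyp : DevSetup S Px A) {a : S} (ha : a ∈ A) (t : ℝ≥0) :
    transDen Px a t a = 1 := by
  refine le_antisymm (td_le_one hyp _ _ _) ?_
  have := Px_le_td hyp a t (ContinuousMap.const ℝ≥0 a)
  rw [hyp.equil a ha] at this
  simpa using this

variable {PL : S → S → ℝ}
  
lemma PL_nonneg (hyp : DevSetup S Px A)
    (hPL : ∀ x y : S, Tendsto (fun t : ℝ≥0 => transDen Px x t y) atTop (𝓝 (PL x y))) (x y : S) :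
    0 ≤ PL x y :=
  ge_of_tendsto' (hPL x y) fun _ => td_nonneg hyp _ _ _

lemma PL_le_one (hyp : DevSetup S Px A)
    (hPL : ∀ x y : S, Tendsto (fun t : ℝ≥0 => transDen Px x t y) atTop (𝓝 (PL x y))) (x y : S) :
    PL x y ≤ 1 :=
  le_of_tendsto' (hPL x y) fun _ => td_le_one hyp _ _ _

lemma PL_mul_td (hyp : DevSetup S Px A)
    (hPL : ∀ x y : S, Tendsto (fun t : ℝ≥0 => transDen Px x t y) atTop (𝓝 (PL x y))) (x y z : S)
    (t : ℝ≥0) : PL x y * transDen Px y t z ≤ PL x z := by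
  have h1 : Tendsto (fun s : ℝ≥0 => transDen Px x s y * transDen Px y t z) atTop
    (𝓝 (PL x y * transDen Px y t z)) := (hPL x y).mul_const _
  have h2 : Tendsto (fun s : ℝ≥0 => transDen Px x (s + t) z) atTop (𝓝 (PL x z)) :=
    (hPL x z).comp (tendsto_atTop_mono (fun _ => le_self_add) tendsto_id)
  exact le_of_tendsto_of_tendsto' h1 h2 fun s => td_mul_le hyp _ _ _ _ _

lemma PL_mul (hyp : DevSetup S Px A)
    (hPL : ∀ x y : S, Tendsto (fun t : ℝ≥0 => transDen Px x t y) atTop (𝓝 (PL x y))) (x y z : S) :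
    PL x y * PL y z ≤ PL x z :=
  le_of_tendsto' ((hPL y z).const_mul (PL x y)) fun _ => PL_mul_td hyp hPL _ _ _ _

lemma td_le_PL_left (hyp : DevSetup S Px A)
    (hPL : ∀ x y : S, Tendsto (fun t : ℝ≥0 => transDen Px x t y) atTop (𝓝 (PL x y))) {a : S}
    (ha : a ∈ A) (y : S) (t : ℝ≥0) : transDen Px a t y ≤ PL a y := by
  have h2 : Tendsto (fun s : ℝ≥0 => transDen Px a (s + t) y) atTop (𝓝 (PL a y)) :=
    (hPL a y).comp (tendsto_atTop_mono (fun _ => le_self_add) tendsto_id)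
  refine ge_of_tendsto' h2 fun s => ?_
  have := td_mul_le hyp a a y s t
  rwa [td_self hyp ha, one_mul] at this

lemma td_le_PL_right (hyp : DevSetup S Px A)
    (hPL : ∀ x y : S, Tendsto (fun t : ℝ≥0 => transDen Px x t y) atTop (𝓝 (PL x y))) {a : S}
    (ha : a ∈ A) (x : S) (t : ℝ≥0) : transDen Px x t a ≤ PL x a := by
  have h2 : Tendsto (fun s : ℝ≥0 => transDen Px x (t + s) a) atTop (𝓝 (PL x a)) :=
    (hPL x a).comp (tendsto_atTop_mono (fun _ => le_add_self) tendsto_id)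
  refine ge_of_tendsto' h2 fun s => ?_
  have := td_mul_le hyp x a a t s
  rwa [td_self hyp ha, mul_one] at this

/-- nearly zero-cost paths hit neighbourhoods of `A`, uniformly -/
lemma hit_zero (hyp : DevSetup S Px A) (K : Set S) (hK : IsCompact K) (δ : ℝ) (hδ : 0 < δ) :
    ∃ (T : ℝ≥0) (η : ℝ), 0 ≤ η ∧ η < 1 ∧ ∀ Y : C(ℝ≥0, S), Y 0 ∈ K →
      (∀ s ≤ T, δ ≤ infDist (Y s) A) → Px (Y 0) Y ≤ η := by
  by_contra hcon
  push Not at hcon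
  set c : ℕ → ℝ := fun m => 1 - 1 / ((m : ℝ) + 2) with hc
  have hc0 : ∀ m, 1 / 2 ≤ c m := fun m => by
    have : 1 / ((m : ℝ) + 2) ≤ 1 / 2 :=
      one_div_le_one_div_of_le (by norm_num) (by linarith [(Nat.cast_nonneg m : (0:ℝ) ≤ m)])
    simp only [hc]; linarith
  have hc1 : ∀ m, c m < 1 := fun m => by
    have : 0 < 1 / ((m : ℝ) + 2) := by positivity
    simp only [hc]; linarith
  have hcm : ∀ m, c m ≤ c (m + 1) := fun m => by
    have : 1 / (((m + 1 : ℕ) : ℝ) + 2) ≤ 1 / ((m : ℝ) + 2) :=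
      one_div_le_one_div_of_le (by positivity) (by push_cast; linarith)
    simp only [hc]; linarith
  let C : ℕ → Set C(ℝ≥0, S) := fun m =>
    {Y | Y 0 ∈ K} ∩ ({Y | ∀ s ≤ (m : ℝ≥0), δ ≤ infDist (Y s) A} ∩ {Y | c m ≤ Px (Y 0) Y})
  have hev : ∀ s : ℝ≥0, Continuous fun Y : C(ℝ≥0, S) => Y s := fun s =>
    continuous_eval_const s
  have hclosed : ∀ m, IsClosed (C m) := by
    intro m
    refine (hK.isClosed.preimage (hev 0)).inter (IsClosed.inter ?_ ?_)
    · simp only [ofPred_forall]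
      refine isClosed_iInter fun s => isClosed_iInter fun _ => ?_
      exact isClosed_le continuous_const ((continuous_infDist_pt A).comp (hev s))
    · have : UpperSemicontinuous fun Y : C(ℝ≥0, S) => Px (Y 0) Y :=
        hyp.usc.comp ((hev 0).prodMk continuous_id)
      exact this.isClosed_preimage (c m)
  have hcomp : IsCompact (C 0) := by
    refine (hyp.cpt K hK (1 / 2) ⟨by norm_num, by norm_num⟩).of_isClosed_subset (hclosed 0) ?_
    rintro Y ⟨h1, _, h3⟩
    exact mem_iUnion₂.2 ⟨Y 0, h1, (hc0 0).trans h3⟩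
  have hne : (⋂ m, C m).Nonempty := by
    refine IsCompact.nonempty_iInter_of_sequence_nonempty_isCompact_isClosed C ?_ ?_ hcomp hclosed
    · rintro m Y ⟨h1, h2, h3⟩
      refine ⟨h1, fun s hs => h2 s (hs.trans ?_), (hcm m).trans h3⟩
      push_cast; simp
    · intro m
      obtain ⟨Y, h1, h2, h3⟩ := hcon m (c m) (by linarith [hc0 m]) (hc1 m)
      exact ⟨Y, h1, h2, h3.le⟩
  obtain ⟨Y, hY⟩ := hne
  rw [mem_iInter] at hY
  have h1 : Px (Y 0) Y = 1 := by
    refine le_antisymm (Px_le_one hyp _ _) ?_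
    have ht : Tendsto c atTop (𝓝 (1 - 0)) := by
      refine tendsto_const_nhds.sub ?_
      exact tendsto_const_nhds.div_atTop
        (tendsto_atTop_add_const_right _ _ tendsto_natCast_atTop_atTop)
    rw [sub_zero] at ht
    exact le_of_tendsto' ht fun m => (hY m).2.2
  have h2 := hyp.attract _ _ h1
  have h3 : δ ≤ ⨅ t : ℝ≥0, infDist (Y t) A := by
    refine le_ciInf fun t => ?_
    obtain ⟨m, hm⟩ := exists_nat_ge t
    exact (hY m).2.1 t hm
  linarith

lemma hit_iter (hyp : DevSetup S Px A) (K : Set S) (δ : ℝ) (T : ℝ≥0) (η : ℝ) (hη : 0 ≤ η)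
    (H : ∀ Y : C(ℝ≥0, S), Y 0 ∈ K →
      (∀ s ≤ T, δ ≤ infDist (Y s) A) → Px (Y 0) Y ≤ η) (m : ℕ) :
    ∀ X : C(ℝ≥0, S), (∀ s, X s ∈ K) → (∀ s ≤ m * T, δ ≤ infDist (X s) A) →
      Px (X 0) X ≤ η ^ m := by
  induction m with
  | zero => intro X _ _; simpa using Px_le_one hyp _ _
  | succ m ih =>
    intro X hXK hX
    rw [hyp.markov (X 0) X T, pow_succ']
    refine mul_le_mul ?_ ?_ (Px_nonneg hyp _ _) hη
    · refine bsup_le hη fun Y hY => ?_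
      have h0 : Y 0 = X 0 := hY 0 zero_le
      rw [← h0]
      refine H Y (h0 ▸ hXK 0) fun s hs => ?_
      rw [hY s hs]
      refine hX s (hs.trans ?_)
      push_cast; rw [add_mul, one_mul]; exact le_add_self
    · have := ih (pshift T X) (fun s => hXK _) (fun s hs => hX (T + s) ?_)
      · simpa [pshift] using this
      · push_cast; rw [add_mul, one_mul, add_comm]; gcongr

lemma hit (hyp : DevSetup S Px A) (K : Set S) (hK : IsCompact K) (γ : ℝ) (hγ : 0 < γ)
    (δ : ℝ) (hδ : 0 < δ) : ∃ T : ℝ≥0, ∀ x ∈ K, ∀ X : C(ℝ≥0, S), γ ≤ Px x X →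
      ∃ s ≤ T, infDist (X s) A < δ := by
  obtain ⟨K₂, hK₂, hlim⟩ := hyp.tight K hK γ hγ
  have hb : ∀ t : ℝ≥0, (⨆ x ∈ K, ⨆ y ∈ K₂ᶜ, transDen Px x t y) ≤ 1 := fun t =>
    bsup_le zero_le_one fun x _ => bsup_le zero_le_one fun y _ => td_le_one hyp _ _ _
  have hev := eventually_lt_of_limsup_lt hlim
    (isBoundedUnder_of ⟨1, hb⟩)
  obtain ⟨T₁, hT₁⟩ := eventually_atTop.1 hev
  obtain ⟨T₀, η, hη0, hη1, H⟩ := hit_zero hyp K₂ hK₂ δ hδ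
  obtain ⟨m, hm⟩ := exists_pow_lt_of_lt_one hγ hη1
  refine ⟨T₁ + m * T₀, fun x hx X hX => ?_⟩
  by_contra hcon
  push Not at hcon
  have hin : ∀ t, T₁ ≤ t → X t ∈ K₂ := by
    intro t ht
    by_contra hn
    have h1 := hT₁ t ht
    have h2 : transDen Px x t (X t) ≤ ⨆ y ∈ K₂ᶜ, transDen Px x t y :=
      le_bsup (f := fun y => transDen Px x t y) (s := K₂ᶜ) zero_le_one (fun _ _ => td_le_one hyp _ _ _) hn
    have h3 : (⨆ y ∈ K₂ᶜ, transDen Px x t y) ≤ ⨆ x ∈ K, ⨆ y ∈ K₂ᶜ, transDen Px x t y :=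
      le_bsup (f := fun x => ⨆ y ∈ K₂ᶜ, transDen Px x t y) (s := K) zero_le_one
        (fun x _ => bsup_le zero_le_one fun y _ => td_le_one hyp _ _ _) hx
    linarith [Px_le_td hyp x t X]
  have h1 := hit_iter hyp K₂ δ T₀ η hη0 H m (pshift T₁ X) (fun s => hin _ le_self_add)
    (fun s hs => hcon _ (by gcongr))
  have h2 := Px_le_mul hyp x T₁ X
  have h3 : Px (X T₁) (pshift T₁ X) ≤ η ^ m := by simpa [pshift] using h1
  have h4 : transDen Px x T₁ (X T₁) * Px (X T₁) (pshift T₁ X) ≤ Px (X T₁) (pshift T₁ X) :=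
    mul_le_of_le_one_left (Px_nonneg hyp _ _) (td_le_one hyp _ _ _)
  linarith

lemma through (hyp : DevSetup S Px A)
    (hPL : ∀ x y : S, Tendsto (fun t : ℝ≥0 => transDen Px x t y) atTop (𝓝 (PL x y)))
    (K : Set S) (hK : IsCompact K) (γ : ℝ) (hγ : 0 < γ)
    (ε : ℝ) (hε : 0 < ε) (hε1 : ε < 1) : ∃ T : ℝ≥0, ∀ t ≥ T, ∀ x ∈ K, ∀ X : C(ℝ≥0, S),
      γ ≤ Px x X → ∃ b ∈ A, Px x X * (1 - ε) ^ 2 ≤ PL x b * PL b (X t) := by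
  obtain ⟨δ, hδ, hn⟩ := hyp.nearA ε hε
  obtain ⟨T, hT⟩ := hit hyp K hK γ hγ δ hδ
  refine ⟨T, fun t ht x hx X hX => ?_⟩
  obtain ⟨s, hs, hsA⟩ := hT x hx X hX
  obtain ⟨s₀, s₁, -, -, b, hb, h1, h2⟩ := hn _ hsA
  refine ⟨b, hb, ?_⟩
  have hst : s + (t - s) = t := add_tsub_cancel_of_le (hs.trans ht)
  have h3 := Px_le_mul hyp x s X
  have h4 : Px (X s) (pshift s X) ≤ transDen Px (X s) (t - s) (X t) := by
    have := Px_le_td hyp (X s) (t - s) (pshift s X)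
    simpa [pshift, hst] using this
  have h5 : transDen Px x s (X s) * (1 - ε) ≤ PL x b :=
    (mul_le_mul_of_nonneg_left h1.le (td_nonneg hyp _ _ _)).trans
      ((td_mul_le hyp _ _ _ _ _).trans (td_le_PL_right hyp hPL hb _ _))
  have h6 : (1 - ε) * transDen Px (X s) (t - s) (X t) ≤ PL b (X t) :=
    (mul_le_mul_of_nonneg_right h2.le (td_nonneg hyp _ _ _)).trans
      ((td_mul_le hyp _ _ _ _ _).trans (td_le_PL_left hyp hPL hb _ _))
  have hε' : 0 ≤ 1 - ε := by linarith
  calc Px x X * (1 - ε) ^ 2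
      ≤ (transDen Px x s (X s) * transDen Px (X s) (t - s) (X t)) * (1 - ε) ^ 2 := by
        gcongr
        exact h3.trans (mul_le_mul_of_nonneg_left h4 (td_nonneg hyp _ _ _))
    _ = (transDen Px x s (X s) * (1 - ε)) * ((1 - ε) * transDen Px (X s) (t - s) (X t)) := by ring
    _ ≤ PL x b * PL b (X t) := mul_le_mul h5 h6
        (mul_nonneg hε' (td_nonneg hyp _ _ _)) (PL_nonneg hyp hPL _ _)


lemma ld_core {Q : ℕ → Measure S} {rate : ℕ → ℕ} {p : S → ℝ}
    (hr : Tendsto rate atTop atTop) (h : LDConv Q rate p)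
    (f : S → ℝ) (hf : Continuous f) (hf01 : ∀ x, f x ∈ Set.Icc (0:ℝ) 1) :
    (∀ θ, (⨆ x, f x * p x) < θ → ∀ᶠ n in atTop, ∫ x, f x ^ rate n ∂(Q n) ≤ θ ^ rate n) ∧
    (∀ θ, 0 ≤ θ → θ < (⨆ x, f x * p x) →
      ∀ᶠ n in atTop, θ ^ rate n ≤ ∫ x, f x ^ rate n ∂(Q n)) := by
  have ht := h f hf (fun x => (hf01 x).1) ⟨1, by rintro _ ⟨x, rfl⟩; exact (hf01 x).2⟩
  have hn : ∀ n, 0 ≤ ∫ x, f x ^ rate n ∂(Q n) := fun n =>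
    integral_nonneg fun x => pow_nonneg (hf01 x).1 _
  have hr0 := hr.eventually_ge_atTop 1
  constructor
  · intro θ hθ
    filter_upwards [ht.eventually_lt_const hθ, hr0] with n h1 h2
    rw [← Real.rpow_inv_natCast_pow (hn n) (n := rate n) (by omega)]
    exact pow_le_pow_left₀ (Real.rpow_nonneg (hn n) _) h1.le _
  · intro θ h0 hθ
    filter_upwards [ht.eventually_const_lt hθ, hr0] with n h1 h2
    rw [← Real.rpow_inv_natCast_pow (hn n) (n := rate n) (by omega)]
    exact pow_le_pow_left₀ h0 h1.le _

lemma ld_int {μ : Measure S} [IsProbabilityMeasure μ] (f : S → ℝ) (hf : Continuous f)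
    (hf01 : ∀ x, f x ∈ Set.Icc (0:ℝ) 1) (n : ℕ) : 
    ENNReal.ofReal (∫ x, f x ^ n ∂μ) = ∫⁻ x, ENNReal.ofReal (f x ^ n) ∂μ := by
  apply ofReal_integral_eq_lintegral_ofReal
  · refine Integrable.of_bound (hf.pow n).measurable.aestronglyMeasurable 1 ?_
    refine Eventually.of_forall fun x => ?_
    rw [Real.norm_eq_abs, abs_of_nonneg (pow_nonneg (hf01 x).1 _)]
    exact pow_le_one₀ (hf01 x).1 (hf01 x).2
  · exact Eventually.of_forall fun x => pow_nonneg (hf01 x).1 _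

lemma ld_upper {Q : ℕ → Measure S} {rate : ℕ → ℕ} {p : S → ℝ}
    (hQ : ∀ n, IsProbabilityMeasure (Q n))
    (hr : Tendsto rate atTop atTop) (h : LDConv Q rate p) (hp0 : ∀ x, 0 ≤ p x)
    {θ₁ θ : ℝ} (h0 : 0 ≤ θ₁) (hθ : θ₁ < θ) {M C : Set S} (hM : IsClosed M) (hC : IsClosed C)
    (hd : Disjoint M C) (hMp : ∀ x ∉ M, p x ≤ θ₁) :
    ∀ᶠ n in atTop, Q n C ≤ ENNReal.ofReal (θ ^ rate n) := by
  obtain ⟨f, hfM, hfC, hf01⟩ := exists_continuous_zero_one_of_isClosed hM hC hd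
  have hsup : (⨆ x, f x * p x) ≤ θ₁ := by
    refine Real.iSup_le (fun x => ?_) h0
    by_cases hx : x ∈ M
    · rw [hfM hx]; simpa using h0
    · exact (mul_le_of_le_one_left (hp0 x) (hf01 x).2).trans (hMp x hx)
  filter_upwards [(ld_core hr h f f.continuous hf01).1 θ (hsup.trans_lt hθ)] with n hn
  have := hQ n
  refine le_trans ?_ (ENNReal.ofReal_le_ofReal hn)
  rw [ld_int f f.continuous hf01]
  calc Q n C = ∫⁻ x, C.indicator 1 x ∂(Q n) := by rw [lintegral_indicator_one hC.measurableSet]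
    _ ≤ _ := by
      refine lintegral_mono fun x => ?_
      by_cases hx : x ∈ C
      · simp [hx, hfC hx]
      · simp [hx]

lemma ld_lower {Q : ℕ → Measure S} {rate : ℕ → ℕ} {p : S → ℝ}
    (hQ : ∀ n, IsProbabilityMeasure (Q n))
    (hr : Tendsto rate atTop atTop) (h : LDConv Q rate p) (hp0 : ∀ x, 0 ≤ p x)
    (hp1 : ∀ x, p x ≤ 1)
    {θ : ℝ} {y : S} (h0 : 0 ≤ θ) (hθ : θ < p y) {V : Set S} (hV : IsOpen V) (hy : y ∈ V) :
    ∀ᶠ n in atTop, ENNReal.ofReal (θ ^ rate n) ≤ Q n V := by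
  obtain ⟨f, hfM, hfC, hf01⟩ := exists_continuous_zero_one_of_isClosed hV.isClosed_compl
    (isClosed_singleton (x := y)) (by simpa using hy)
  have hsup : p y ≤ (⨆ x, f x * p x) := by
    have hb : BddAbove (Set.range fun x => f x * p x) :=
      ⟨1, by rintro _ ⟨x, rfl⟩; exact mul_le_one₀ (hf01 x).2 (hp0 x) (hp1 x)⟩
    have := le_ciSup hb y
    have h1 : f y = 1 := hfC rfl
    simpa [h1] using this
  filter_upwards [(ld_core hr h f f.continuous hf01).2 θ h0 (hθ.trans_le hsup),
    hr.eventually_ge_atTop 1] with n hn hn1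
  have := hQ n
  refine le_trans (ENNReal.ofReal_le_ofReal hn) ?_
  rw [ld_int f f.continuous hf01]
  calc _ ≤ ∫⁻ x, V.indicator 1 x ∂(Q n) := by
        refine lintegral_mono fun x => ?_
        by_cases hx : x ∈ V
        · simp only [hx, indicator_of_mem, Pi.one_apply]
          rw [ENNReal.ofReal_le_one]
          exact pow_le_one₀ (hf01 x).1 (hf01 x).2
        · have : f x = 0 := hfM hx
          simp [hx, this, zero_pow (show rate n ≠ 0 by omega)]
    _ = Q n V := by rw [lintegral_indicator_one hV.measurableSet]

/-- sequential characterisation of locally uniform eventual validity -/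
lemma unif_of_seq {R : ℕ → S → Prop} {x : S}
    (H : ∀ xs : ℕ → S, Tendsto xs atTop (𝓝 x) → ∀ᶠ n in atTop, R n (xs n)) :
    ∀ᶠ q in (atTop : Filter ℕ) ×ˢ 𝓝 x, R q.1 q.2 := by
  by_contra hcon
  obtain ⟨ns, hns, hnR⟩ := exists_seq_forall_of_frequently (not_eventually.1 hcon)
  have h1 : Tendsto (fun k => (ns k).1) atTop atTop := tendsto_fst.comp hns
  have h2 : Tendsto (fun k => (ns k).2) atTop (𝓝 x) := tendsto_snd.comp hns
  obtain ⟨ψ, hψ, hm⟩ := strictMono_subseq_of_tendsto_atTop h1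
  set u : ℕ → ℕ := (fun k => (ns k).1) ∘ ψ with hu
  set v : ℕ → S := fun k => (ns (ψ k)).2 with hv
  have hv' : Tendsto v atTop (𝓝 x) := h2.comp hψ.tendsto_atTop
  let xs : ℕ → S := Function.extend u v (fun _ => x)
  have hxs : Tendsto xs atTop (𝓝 x) := by
    rw [tendsto_def]
    intro W hW
    obtain ⟨K, hK⟩ := eventually_atTop.1 (hv'.eventually_mem hW)
    filter_upwards [eventually_ge_atTop (u K)] with n hn
    by_cases he : ∃ k, u k = n
    · obtain ⟨k, rfl⟩ := he
      have : xs (u k) = v k := hm.injective.extend_apply _ _ _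
      rw [mem_preimage, this]
      exact hK k (hm.le_iff_le.1 hn)
    · have : xs n = x := Function.extend_apply' _ _ _ he
      rw [mem_preimage, this]
      exact mem_of_mem_nhds hW
  have h3 := hm.tendsto_atTop.eventually (H xs hxs)
  obtain ⟨k, hk⟩ := h3.exists
  have : xs (u k) = v k := hm.injective.extend_apply _ _ _
  rw [this] at hk
  exact hnR (ψ k) hk

lemma td_level (hyp : DevSetup S Px A) (x : S) (t : ℝ≥0) {γ : ℝ} (h0 : 0 < γ) :
    ∃ M : Set S, IsClosed M ∧ (∀ y ∈ M, γ ≤ transDen Px x t y) ∧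
      ∀ y ∉ M, transDen Px x t y ≤ γ := by
  by_cases h1 : γ ≤ 1
  · refine ⟨Set.image (fun X : C(ℝ≥0, S) => X t) {X | γ ≤ Px x X}, ?_, ?_, ?_⟩
    · exact (((hyp.dev x).2.2 γ ⟨h0, h1⟩).image (continuous_eval_const t)).isClosed
    · rintro _ ⟨X, hX, rfl⟩
      exact le_trans hX (Px_le_td hyp x t X)
    · intro y hy
      refine bsup_le h0.le fun X hX => ?_
      by_contra hn
      exact hy ⟨X, (not_le.1 hn).le, hX⟩
  · refine ⟨∅, isClosed_empty, by simp, fun y _ => (td_le_one hyp x t y).trans (not_le.1 h1).le⟩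

section Meas

variable {κ : ℕ → ℝ≥0 → ProbabilityTheory.Kernel S S}

lemma kernel_upper (hyp : DevSetup S Px A)
    (hκ : ∀ n t, ProbabilityTheory.IsMarkovKernel (κ n t))
    (hκLD : ∀ (t : ℝ≥0) (x : S) (xs : ℕ → S), Tendsto xs atTop (𝓝 x) →
      LDConv (fun n => κ n t (xs n)) (fun n => n) (fun y => transDen Px x t y))
    (t : ℝ≥0) (x : S) {C : Set S} (hC : IsClosed C) {θ₀ θ : ℝ} (h0 : 0 ≤ θ₀) (hθ : θ₀ < θ)
    (hb : ∀ y ∈ C, transDen Px x t y ≤ θ₀) :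
    ∀ᶠ q in (atTop : Filter ℕ) ×ˢ 𝓝 x, κ q.1 t q.2 C ≤ ENNReal.ofReal (θ ^ q.1) := by
  refine unif_of_seq (R := fun n x' => κ n t x' C ≤ ENNReal.ofReal (θ ^ n)) fun xs hxs => ?_
  obtain ⟨M, hM, hM1, hM2⟩ := td_level hyp x t (γ := (θ₀ + θ) / 2) (by linarith)
  refine ld_upper (fun n => ?_) tendsto_id (hκLD t x xs hxs) (fun y => td_nonneg hyp _ _ _)
    (θ₁ := (θ₀ + θ) / 2) (by linarith) (by linarith) hM hC ?_ hM2
  · have := hκ n t; infer_instance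
  · rw [Set.disjoint_left]
    intro y hy hyC
    linarith [hM1 y hy, hb y hyC]

lemma kernel_lower (hyp : DevSetup S Px A)
    (hκ : ∀ n t, ProbabilityTheory.IsMarkovKernel (κ n t))
    (hκLD : ∀ (t : ℝ≥0) (x : S) (xs : ℕ → S), Tendsto xs atTop (𝓝 x) →
      LDConv (fun n => κ n t (xs n)) (fun n => n) (fun y => transDen Px x t y))
    (t : ℝ≥0) (x y : S) {V : Set S} (hV : IsOpen V) (hy : y ∈ V) {θ : ℝ} (h0 : 0 ≤ θ)
    (hθ : θ < transDen Px x t y) :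
    ∀ᶠ q in (atTop : Filter ℕ) ×ˢ 𝓝 x, ENNReal.ofReal (θ ^ q.1) ≤ κ q.1 t q.2 V := by
  refine unif_of_seq (R := fun n x' => ENNReal.ofReal (θ ^ n) ≤ κ n t x' V) fun xs hxs => ?_
  refine ld_lower (fun n => ?_) tendsto_id (hκLD t x xs hxs) (fun y => td_nonneg hyp _ _ _)
    (fun y => td_le_one hyp _ _ _) h0 hθ hV hy
  have := hκ n t; infer_instance

variable {P : ℕ → Measure S} {ρ : S → ℝ} {φ : ℕ → ℕ}

lemma rho_closed (hρdev : IsDeviabilityDensity ρ) {γ : ℝ} (h0 : 0 < γ) :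
    IsCompact {x | γ ≤ ρ x} := by
  by_cases h1 : γ ≤ 1
  · exact hρdev.2.2 γ ⟨h0, h1⟩
  · have : {x | γ ≤ ρ x} = ∅ := by
      ext x
      simp only [mem_ofPred_eq, mem_empty_iff_false, iff_false, not_le]
      exact ((hρdev.1 x).2).trans_lt (not_le.1 h1)
    rw [this]; exact isCompact_empty

lemma P_upper (hP : ∀ n, IsProbabilityMeasure (P n)) (hρdev : IsDeviabilityDensity ρ)
    (hφ : StrictMono φ) (hρ : LDConv (fun k => P (φ k)) φ ρ) {C : Set S} (hC : IsClosed C)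
    {θ₀ θ : ℝ} (h0 : 0 ≤ θ₀) (hθ : θ₀ < θ) (hb : ∀ x ∈ C, ρ x ≤ θ₀) :
    ∀ᶠ k in atTop, P (φ k) C ≤ ENNReal.ofReal (θ ^ φ k) := by
  refine ld_upper (fun n => hP _) hφ.tendsto_atTop hρ (fun y => (hρdev.1 y).1)
    (θ₁ := (θ₀ + θ) / 2) (by linarith) (by linarith)
    (rho_closed hρdev (γ := (θ₀ + θ) / 2) (by linarith)).isClosed hC ?_ ?_
  · rw [Set.disjoint_left]
    intro y hy hyC
    have : (θ₀ + θ) / 2 ≤ ρ y := hy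
    linarith [hb y hyC]
  · intro x hx
    exact (not_le.1 hx).le

lemma flux_lower (hyp : DevSetup S Px A)
    (hκ : ∀ n t, ProbabilityTheory.IsMarkovKernel (κ n t))
    (hκLD : ∀ (t : ℝ≥0) (x : S) (xs : ℕ → S), Tendsto xs atTop (𝓝 x) →
      LDConv (fun n => κ n t (xs n)) (fun n => n) (fun y => transDen Px x t y))
    (hP : ∀ n, IsProbabilityMeasure (P n)) (hρdev : IsDeviabilityDensity ρ)
    (hφ : StrictMono φ) (hρ : LDConv (fun k => P (φ k)) φ ρ) (t : ℝ≥0)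
    {U V : Set S} (hU : IsOpen U) (hV : IsOpen V) {x y : S} (hx : x ∈ U) (hy : y ∈ V)
    {θ : ℝ} (h0 : 0 ≤ θ) (hθ : θ < ρ x * transDen Px x t y) :
    ∀ᶠ k in atTop, ENNReal.ofReal (θ ^ φ k) ≤ ∫⁻ z in U, κ (φ k) t z V ∂(P (φ k)) := by
  set a := ρ x
  set b := transDen Px x t y with hbdef
  have ha0 : 0 ≤ a := (hρdev.1 x).1
  have hb0 : 0 ≤ b := td_nonneg hyp _ _ _
  have ha1 : a ≤ 1 := (hρdev.1 x).2
  have hb1 : b ≤ 1 := td_le_one hyp _ _ _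
  have hab : 0 < a * b := h0.trans_lt hθ
  have ha : 0 < a := pos_of_mul_pos_left hab hb0
  have hb : 0 < b := pos_of_mul_pos_right hab ha0
  obtain ⟨e, he, hea, heb, hee⟩ : ∃ e : ℝ, 0 < e ∧ e ≤ a ∧ e ≤ b ∧ 2 * e ≤ a * b - θ :=
    ⟨min (min a b) ((a * b - θ) / 2), by
      refine lt_min (lt_min ha hb) (by linarith),
      (min_le_left _ _).trans (min_le_left _ _), (min_le_left _ _).trans (min_le_right _ _), by
      have := min_le_right (min a b) ((a * b - θ) / 2); linarith⟩
  have hk := kernel_lower hyp hκ hκLD t x y hV hy (θ := b - e) (by linarith) (by linarith)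
  obtain ⟨pa, hpa, pb, hpb, hab'⟩ := eventually_prod_iff.1 hk
  obtain ⟨W, hWs, hWo, hxW⟩ := _root_.mem_nhds_iff.1 (inter_mem hpb (hU.mem_nhds hx))
  have hl := ld_lower (fun k => hP (φ k)) hφ.tendsto_atTop hρ (fun y => (hρdev.1 y).1)
    (fun y => (hρdev.1 y).2) (θ := a - e) (y := x) (by linarith) (by linarith) hWo hxW
  filter_upwards [hl, hφ.tendsto_atTop.eventually hpa] with k h1 h2
  calc ENNReal.ofReal (θ ^ φ k) ≤ ENNReal.ofReal ((b - e) ^ φ k * (a - e) ^ φ k) := by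
        rw [← mul_pow]
        refine ENNReal.ofReal_le_ofReal (pow_le_pow_left₀ h0 ?_ _)
        nlinarith
    _ = ENNReal.ofReal ((b - e) ^ φ k) * ENNReal.ofReal ((a - e) ^ φ k) :=
        ENNReal.ofReal_mul (pow_nonneg (by linarith) _)
    _ ≤ ENNReal.ofReal ((b - e) ^ φ k) * P (φ k) W := by gcongr
    _ = ∫⁻ z in W, ENNReal.ofReal ((b - e) ^ φ k) ∂(P (φ k)) := by simp
    _ ≤ ∫⁻ z in W, κ (φ k) t z V ∂(P (φ k)) :=
        setLIntegral_mono ((κ (φ k) t).measurable_coe hV.measurableSet)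
          fun z hz => hab' h2 (hWs hz).1
    _ ≤ _ := lintegral_mono_set fun z hz => (hWs hz).2

lemma flux_upper (hyp : DevSetup S Px A)
    (hκ : ∀ n t, ProbabilityTheory.IsMarkovKernel (κ n t))
    (hκLD : ∀ (t : ℝ≥0) (x : S) (xs : ℕ → S), Tendsto xs atTop (𝓝 x) →
      LDConv (fun n => κ n t (xs n)) (fun n => n) (fun y => transDen Px x t y))
    (hP : ∀ n, IsProbabilityMeasure (P n)) (hρdev : IsDeviabilityDensity ρ)
    (hφ : StrictMono φ) (hρ : LDConv (fun k => P (φ k)) φ ρ) (t : ℝ≥0)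
    {D C : Set S} (hD : IsClosed D) (hC : IsClosed C)
    {θ₀ θ : ℝ} (h0 : 0 < θ₀) (hθ : θ₀ < θ)
    (hb : ∀ x ∈ D, ∀ y ∈ C, ρ x * transDen Px x t y ≤ θ₀) :
    ∃ M : ℕ, ∀ᶠ k in atTop,
      ∫⁻ z in D, κ (φ k) t z C ∂(P (φ k)) ≤ M * ENNReal.ofReal (θ ^ φ k) := by
  have hKc : IsCompact ({x | θ₀ ≤ ρ x} ∩ D) := (rho_closed hρdev h0).inter_right hD
  have key : ∃ U : Set S, IsOpen U ∧ ({x | θ₀ ≤ ρ x} ∩ D) ⊆ U ∧ ∃ M : ℕ, ∀ᶠ k in atTop,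
      ∫⁻ z in U, κ (φ k) t z C ∂(P (φ k)) ≤ M * ENNReal.ofReal (θ ^ φ k) := by
    refine hKc.induction_on (p := fun s => ∃ U : Set S, IsOpen U ∧ s ⊆ U ∧ ∃ M : ℕ,
      ∀ᶠ k in atTop,
      ∫⁻ z in U, κ (φ k) t z C ∂(P (φ k)) ≤ M * ENNReal.ofReal (θ ^ φ k)) ?_ ?_ ?_ ?_
    · exact ⟨∅, isOpen_empty, subset_rfl, 0, by simp⟩
    · rintro s s' hs ⟨U, hU, hsU, hM⟩
      exact ⟨U, hU, hs.trans hsU, hM⟩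
    · rintro s s' ⟨U, hU, hsU, M, hM⟩ ⟨U', hU', hsU', M', hM'⟩
      refine ⟨U ∪ U', hU.union hU', union_subset_union hsU hsU', M + M', ?_⟩
      filter_upwards [hM, hM'] with k h1 h2
      refine (lintegral_union_le _ _ _).trans ?_
      push_cast
      rw [add_mul]
      exact add_le_add h1 h2
    · rintro x ⟨-, hxD⟩
      set a := ρ x
      set b := ⨆ y ∈ C, transDen Px x t y
      have ha0 : 0 ≤ a := (hρdev.1 x).1
      have ha1 : a ≤ 1 := (hρdev.1 x).2
      have hb0 : 0 ≤ b := bsup_nonneg fun _ _ => td_nonneg hyp _ _ _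
      have hb1 : b ≤ 1 := bsup_le zero_le_one fun _ _ => td_le_one hyp _ _ _
      have hab : a * b ≤ θ₀ := by
        rw [mul_comm]
        refine bsup_mul_le ha0 h0.le fun y hy => ?_
        rw [mul_comm]; exact hb x hxD y hy
      obtain ⟨e, he, he1, hee⟩ : ∃ e : ℝ, 0 < e ∧ e ≤ 1 ∧ 3 * e ≤ θ - θ₀ :=
        ⟨min 1 ((θ - θ₀) / 3), lt_min one_pos (by linarith), min_le_left _ _, by
          have := min_le_right 1 ((θ - θ₀) / 3); linarith⟩
      have hk := kernel_upper hyp hκ hκLD t x hC (θ₀ := b) (θ := b + e) hb0 (by linarith)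
        (fun y hy => le_bsup (f := fun y => transDen Px x t y) (s := C) zero_le_one
          (fun _ _ => td_le_one hyp _ _ _) hy)
      obtain ⟨pa, hpa, pb, hpb, hab'⟩ := eventually_prod_iff.1 hk
      have hop : {z | a + e / 2 ≤ ρ z}ᶜ ∈ 𝓝 x :=
        (rho_closed hρdev (γ := a + e / 2) (by linarith)).isClosed.isOpen_compl.mem_nhds (by
          simp only [mem_compl_iff, mem_ofPred_eq, not_le]; show a < a + e / 2; linarith)
      obtain ⟨r, hr, hrs⟩ := nhds_basis_closedBall.mem_iff.1 (inter_mem hpb hop)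
      have hPu := P_upper hP hρdev hφ hρ (C := closedBall x r) isClosed_closedBall
        (θ₀ := a + e / 2) (θ := a + e) (by linarith) (by linarith)
        (fun z hz => le_of_not_ge (hrs hz).2)
      refine ⟨ball x r, mem_nhdsWithin_of_mem_nhds (ball_mem_nhds x hr), ball x r, isOpen_ball,
        subset_rfl, 1, ?_⟩
      filter_upwards [hPu, hφ.tendsto_atTop.eventually hpa] with k h1 h2
      calc ∫⁻ z in ball x r, κ (φ k) t z C ∂(P (φ k))
          ≤ ∫⁻ z in ball x r, ENNReal.ofReal ((b + e) ^ φ k) ∂(P (φ k)) :=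
            setLIntegral_mono measurable_const
              fun z hz => hab' h2 (hrs (ball_subset_closedBall hz)).1
        _ = ENNReal.ofReal ((b + e) ^ φ k) * P (φ k) (ball x r) := by simp
        _ ≤ ENNReal.ofReal ((b + e) ^ φ k) * ENNReal.ofReal ((a + e) ^ φ k) := by
            gcongr
            exact (measure_mono ball_subset_closedBall).trans h1
        _ = ENNReal.ofReal (((b + e) * (a + e)) ^ φ k) := by
            rw [mul_pow, ENNReal.ofReal_mul (pow_nonneg (by linarith) _)]
        _ ≤ _ := by
            rw [Nat.cast_one, one_mul]
            refine ENNReal.ofReal_le_ofReal (pow_le_pow_left₀ (by positivity) ?_ _)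
            nlinarith
  obtain ⟨U, hU, hsU, M, hM⟩ := key
  refine ⟨M + 1, ?_⟩
  have hrest := P_upper hP hρdev hφ hρ (C := D \ U) (hD.sdiff hU) h0.le hθ (fun x hx => by
    by_contra hn
    exact hx.2 (hsU ⟨(not_le.1 hn).le, hx.1⟩))
  filter_upwards [hM, hrest] with k h1 h2
  calc ∫⁻ z in D, κ (φ k) t z C ∂(P (φ k))
      ≤ ∫⁻ z in U ∪ D \ U, κ (φ k) t z C ∂(P (φ k)) :=
        lintegral_mono_set (by rw [union_sdiff_self]; exact subset_union_right)
    _ ≤ ∫⁻ z in U, κ (φ k) t z C ∂(P (φ k)) + ∫⁻ z in D \ U, κ (φ k) t z C ∂(P (φ k)) :=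
        lintegral_union_le _ _ _
    _ ≤ M * ENNReal.ofReal (θ ^ φ k) + P (φ k) (D \ U) := by
        gcongr
        have := hκ (φ k) t
        calc _ ≤ ∫⁻ z in D \ U, 1 ∂(P (φ k)) := lintegral_mono fun z => prob_le_one
          _ = _ := by simp
    _ ≤ _ := by
        push_cast
        rw [add_mul, one_mul]
        gcongr

/-- comparison of exponential rates -/
lemma rate_contra (hφ : StrictMono φ) {θ₀ θ₁ : ℝ} (h0 : 0 < θ₀) (h1 : θ₀ < θ₁) (M : ℕ)
    {J : ℕ → ENNReal} (hl : ∀ᶠ k in atTop, ENNReal.ofReal (θ₁ ^ φ k) ≤ J k)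
    (hu : ∀ᶠ k in atTop, J k ≤ M * ENNReal.ofReal (θ₀ ^ φ k)) : False := by
  have ht : Tendsto (fun k => (θ₁ / θ₀) ^ φ k) atTop atTop :=
    (tendsto_pow_atTop_atTop_of_one_lt ((one_lt_div h0).2 h1)).comp hφ.tendsto_atTop
  obtain ⟨k, ha, hb, hc⟩ := (hl.and (hu.and (ht.eventually_gt_atTop (M : ℝ)))).exists
  have h2 := ha.trans hb
  rw [← ENNReal.ofReal_natCast, ← ENNReal.ofReal_mul (Nat.cast_nonneg _),
    ENNReal.ofReal_le_ofReal_iff (by positivity)] at h2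
  rw [div_pow, lt_div_iff₀ (by positivity)] at hc
  linarith

lemma flux_balance (hκ : ∀ n t, ProbabilityTheory.IsMarkovKernel (κ n t))
    (hP : ∀ n, IsProbabilityMeasure (P n))
    (hinv : ∀ n (t : ℝ≥0) (Γ : Set S), MeasurableSet Γ →
      P n Γ = ∫⁻ x, κ n t x Γ ∂(P n)) (n : ℕ) (t : ℝ≥0) {D : Set S} (hD : MeasurableSet D) :
    ∫⁻ z in Dᶜ, κ n t z D ∂(P n) = ∫⁻ z in D, κ n t z Dᶜ ∂(P n) := by
  have := hκ n t
  have := hP n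
  have h1 : P n D = ∫⁻ z in D, κ n t z D ∂(P n) + ∫⁻ z in Dᶜ, κ n t z D ∂(P n) := by
    rw [hinv n t D hD, lintegral_add_compl _ hD]
  have h2 : P n D = ∫⁻ z in D, κ n t z D ∂(P n) + ∫⁻ z in D, κ n t z Dᶜ ∂(P n) := by
    rw [← lintegral_add_left ((κ n t).measurable_coe hD)]
    simp [prob_add_prob_compl hD]
  have hfin : ∫⁻ z in D, κ n t z D ∂(P n) ≠ ⊤ := by
    intro h
    rw [h, top_add] at h1
    exact measure_ne_top _ _ h1
  exact (ENNReal.add_right_inj hfin).1 (h1.symm.trans h2)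

lemma rho_mul_td (hyp : DevSetup S Px A)
    (hκ : ∀ n t, ProbabilityTheory.IsMarkovKernel (κ n t))
    (hκLD : ∀ (t : ℝ≥0) (x : S) (xs : ℕ → S), Tendsto xs atTop (𝓝 x) →
      LDConv (fun n => κ n t (xs n)) (fun n => n) (fun y => transDen Px x t y))
    (hP : ∀ n, IsProbabilityMeasure (P n))
    (hinv : ∀ n (t : ℝ≥0) (Γ : Set S), MeasurableSet Γ →
      P n Γ = ∫⁻ x, κ n t x Γ ∂(P n)) (hρdev : IsDeviabilityDensity ρ)
    (hφ : StrictMono φ) (hρ : LDConv (fun k => P (φ k)) φ ρ) (x y : S) (t : ℝ≥0) :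
    ρ x * transDen Px x t y ≤ ρ y := by
  by_contra hn
  push Not at hn
  have hy0 := (hρdev.1 y).1
  obtain ⟨m2, hm2, hm2'⟩ := exists_between hn
  obtain ⟨m1, hm1, hm1'⟩ := exists_between hm2
  obtain ⟨m0, hm0, hm0'⟩ := exists_between hm1
  have hop : {z | m0 ≤ ρ z}ᶜ ∈ 𝓝 y :=
    (rho_closed hρdev (γ := m0) (by linarith)).isClosed.isOpen_compl.mem_nhds (by
      simpa using hm0)
  obtain ⟨r, hr, hrs⟩ := nhds_basis_closedBall.mem_iff.1 hop
  have hu := P_upper hP hρdev hφ hρ (C := closedBall y r) isClosed_closedBall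
        (θ₀ := m0) (θ := m1) (by linarith) (by linarith)
        (fun z hz => le_of_not_ge (hrs hz))
  have hl := flux_lower hyp hκ hκLD hP hρdev hφ hρ t isOpen_univ (isOpen_ball (x := y) (ε := r))
    (mem_univ x) (mem_ball_self hr) (θ := m2) (by linarith) hm2'
  refine rate_contra hφ (θ₀ := m1) (θ₁ := m2) (by linarith) hm1' 1 hl ?_
  filter_upwards [hu] with k hk
  rw [setLIntegral_univ, ← hinv _ _ _ measurableSet_ball, Nat.cast_one, one_mul]
  exact (measure_mono ball_subset_closedBall).trans hk

lemma td_path {x y : S} {t : ℝ≥0} {r c : ℝ} (hr : 0 ≤ r) (hc : 0 ≤ c)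
    (h : c < r * transDen Px x t y) : ∃ X : C(ℝ≥0, S), X t = y ∧ c < r * Px x X := by
  by_contra hcon
  push Not at hcon
  have : transDen Px x t y * r ≤ c := bsup_mul_le hr hc fun X hX => by
    rw [mul_comm]; exact hcon X hX
  linarith

lemma rho_from (hyp : DevSetup S Px A)
    (hPL : ∀ x y : S, Tendsto (fun t : ℝ≥0 => transDen Px x t y) atTop (𝓝 (PL x y)))
    (hκ : ∀ n t, ProbabilityTheory.IsMarkovKernel (κ n t))
    (hκLD : ∀ (t : ℝ≥0) (x : S) (xs : ℕ → S), Tendsto xs atTop (𝓝 x) →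
      LDConv (fun n => κ n t (xs n)) (fun n => n) (fun y => transDen Px x t y))
    (hP : ∀ n, IsProbabilityMeasure (P n))
    (hinv : ∀ n (t : ℝ≥0) (Γ : Set S), MeasurableSet Γ →
      P n Γ = ∫⁻ x, κ n t x Γ ∂(P n)) (hρdev : IsDeviabilityDensity ρ)
    (hφ : StrictMono φ) (hρ : LDConv (fun k => P (φ k)) φ ρ)
    (hρm : ∀ x y, ρ x * PL x y ≤ ρ y) (y : S) (hy : 0 < ρ y)
    {η : ℝ} (hη : 0 < η) (hη1 : η < 1) : ∃ b ∈ A, ρ y * (1 - η) ≤ ρ b * PL b y := by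
  set ε := η / 4 with hε
  have hε0 : 0 < ε := by positivity
  have hε1 : ε < 1 := by linarith
  have hbern : 1 - η ≤ (1 - ε) ^ 4 := by
    have := one_add_mul_le_pow (a := -ε) (by linarith) 4
    norm_num at this
    rw [← sub_eq_add_neg] at this
    linarith
  obtain ⟨δ, hδ, t₀, t₁, hmove⟩ := hyp.localMove y ε hε0
  set θ₀ := ρ y * (1 - ε) with hθ₀
  have hθ₀pos : 0 < θ₀ := mul_pos hy (by linarith)
  have hθ₀lt : θ₀ < ρ y := by rw [hθ₀]; nlinarith
  obtain ⟨T, hT⟩ := through hyp hPL {z | θ₀ ≤ ρ z} (rho_closed hρdev hθ₀pos) θ₀ hθ₀pos ε hε0 hε1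
  have hex : ∃ z, ∃ y' ∈ closedBall y (δ / 2), θ₀ < ρ z * transDen Px z T y' := by
    by_contra hcon
    push Not at hcon
    obtain ⟨m1, hm1, hm1'⟩ := exists_between hθ₀lt
    obtain ⟨m2, hm2, hm2'⟩ := exists_between hm1'
    obtain ⟨M, hM⟩ := flux_upper hyp hκ hκLD hP hρdev hφ hρ T isClosed_univ
      (isClosed_closedBall (x := y) (ε := δ / 2)) hθ₀pos hm1 (fun z _ y' hy' => hcon z y' hy')
    have hl := ld_lower (fun k => hP (φ k)) hφ.tendsto_atTop hρ (fun y => (hρdev.1 y).1)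
      (fun y => (hρdev.1 y).2) (θ := m2) (y := y) (by linarith) hm2' isOpen_ball
      (mem_ball_self (half_pos hδ))
    refine rate_contra hφ (θ₀ := m1) (θ₁ := m2) (by linarith) hm2 M hl ?_
    filter_upwards [hM] with k hk
    rw [setLIntegral_univ, ← hinv _ _ _ measurableSet_closedBall] at hk
    exact (measure_mono ball_subset_closedBall).trans hk
  obtain ⟨z, y', hy', hz⟩ := hex
  have hz0 := (hρdev.1 z).1
  have hz1 := (hρdev.1 z).2
  obtain ⟨X, hXt, hX⟩ := td_path hz0 hθ₀pos.le hz
  have hP0 := Px_nonneg hyp z X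
  have hP1 := Px_le_one hyp z X
  have hzθ : θ₀ ≤ ρ z := by nlinarith
  have hPθ : θ₀ ≤ Px z X := by nlinarith
  obtain ⟨b, hb, hbX⟩ := hT T le_rfl z hzθ X hPθ
  rw [hXt] at hbX
  refine ⟨b, hb, ?_⟩
  have hm := (hmove y' (by
    rw [mem_closedBall, dist_comm] at hy'; linarith)).2
  have h1 := PL_mul_td hyp hPL b y' y t₁
  have hε' : 0 ≤ 1 - ε := by linarith
  have hb0 := (hρdev.1 b).1
  have hPLb := PL_nonneg hyp hPL b y'
  calc ρ y * (1 - η) ≤ ρ y * (1 - ε) ^ 4 := by gcongr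
    _ = θ₀ * (1 - ε) ^ 3 := by rw [hθ₀]; ring
    _ ≤ (ρ z * Px z X) * (1 - ε) ^ 3 := by gcongr
    _ = (ρ z * (Px z X * (1 - ε) ^ 2)) * (1 - ε) := by ring
    _ ≤ (ρ z * (PL z b * PL b y')) * (1 - ε) := by gcongr
    _ = (ρ z * PL z b) * (PL b y' * (1 - ε)) := by ring
    _ ≤ ρ b * (PL b y' * transDen Px y' t₁ y) := by
        refine mul_le_mul (hρm z b) (by gcongr) (by positivity) hb0
    _ ≤ ρ b * PL b y := by gcongr

lemma to_A (hyp : DevSetup S Px A)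
    (hPL : ∀ x y : S, Tendsto (fun t : ℝ≥0 => transDen Px x t y) atTop (𝓝 (PL x y)))
    (x : S) {η : ℝ} (hη : 0 < η) (hη1 : η < 1) : ∃ a ∈ A, 1 - η ≤ PL x a := by
  set ε := η / 3 with hε
  have hε0 : 0 < ε := by positivity
  have hε1 : ε < 1 := by linarith
  have hbern : 1 - η ≤ (1 - ε) ^ 3 := by
    have := one_add_mul_le_pow (a := -ε) (by linarith) 3
    norm_num at this
    rw [← sub_eq_add_neg] at this
    linarith
  have : Nonempty C(ℝ≥0, S) := ⟨ContinuousMap.const ℝ≥0 x⟩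
  obtain ⟨X, hX⟩ := exists_lt_of_lt_ciSup (show 1 - ε < ⨆ X, Px x X by
    rw [(hyp.dev x).2.1]; linarith)
  obtain ⟨T, hT⟩ := through hyp hPL {x} isCompact_singleton (1 - ε) (by linarith) ε hε0 hε1
  obtain ⟨b, hb, h⟩ := hT T le_rfl x rfl X hX.le
  refine ⟨b, hb, ?_⟩
  have h1 : PL x b * PL b (X T) ≤ PL x b :=
    mul_le_of_le_one_right (PL_nonneg hyp hPL _ _) (PL_le_one hyp hPL _ _)
  have h2 : (1 - ε) * (1 - ε) ^ 2 ≤ Px x X * (1 - ε) ^ 2 := by gcongr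
  nlinarith

lemma flux_ge (hyp : DevSetup S Px A)
    (hPL : ∀ x y : S, Tendsto (fun t : ℝ≥0 => transDen Px x t y) atTop (𝓝 (PL x y)))
    (hρdev : IsDeviabilityDensity ρ) {Γ Γ' : Set S} {a b : S} (ha : a ∈ Γ) (hb : b ∈ Γ') :
    ρ a * PL a b ≤ maxFlux PL ρ Γ Γ' := by
  have h1 : PL a b ≤ ⨆ y ∈ Γ', PL a y :=
    le_bsup (f := fun y => PL a y) zero_le_one (fun _ _ => PL_le_one hyp hPL _ _) hb
  refine (mul_le_mul_of_nonneg_left h1 (hρdev.1 a).1).trans ?_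
  refine le_bsup (f := fun x => ρ x * ⨆ y ∈ Γ', PL x y) (s := Γ) zero_le_one (fun x _ => ?_) ha
  exact mul_le_one₀ (hρdev.1 x).2 (bsup_nonneg fun _ _ => PL_nonneg hyp hPL _ _)
    (bsup_le zero_le_one fun _ _ => PL_le_one hyp hPL _ _)

lemma flux_le (hρdev : IsDeviabilityDensity ρ) {Γ Γ' : Set S} {c : ℝ} (hc : 0 ≤ c)
    (h : c < maxFlux PL ρ Γ Γ') : ∃ a ∈ Γ, ∃ b ∈ Γ', c < ρ a * PL a b := by
  obtain ⟨a, ha, h1⟩ := lt_bsup hc h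
  refine ⟨a, ha, ?_⟩
  by_contra hcon
  push Not at hcon
  have : (⨆ y ∈ Γ', PL a y) * ρ a ≤ c := bsup_mul_le (hρdev.1 a).1 hc fun y hy => by
    rw [mul_comm]; exact hcon y hy
  linarith

set_option maxHeartbeats 1600000 in
lemma main_le (hyp : DevSetup S Px A)
    (hPL : ∀ x y : S, Tendsto (fun t : ℝ≥0 => transDen Px x t y) atTop (𝓝 (PL x y)))
    (hκ : ∀ n t, ProbabilityTheory.IsMarkovKernel (κ n t))
    (hP : ∀ n, IsProbabilityMeasure (P n))
    (hinv : ∀ n (t : ℝ≥0) (Γ : Set S), MeasurableSet Γ →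
      P n Γ = ∫⁻ x, κ n t x Γ ∂(P n))
    (hκLD : ∀ (t : ℝ≥0) (x : S) (xs : ℕ → S), Tendsto xs atTop (𝓝 x) →
      LDConv (fun n => κ n t (xs n)) (fun n => n) (fun y => transDen Px x t y))
    (hρdev : IsDeviabilityDensity ρ)
    (hφ : StrictMono φ) (hρ : LDConv (fun k => P (φ k)) φ ρ)
    (A' A'' : Set S) (hA : A' ∪ A'' = A) :
    maxFlux PL ρ A' A'' ≤ maxFlux PL ρ A'' A' := by
  by_contra hcon
  push Not at hcon
  set F := maxFlux PL ρ A' A'' with hF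
  set G := maxFlux PL ρ A'' A' with hG
  have hρ0 : ∀ x, 0 ≤ ρ x := fun x => (hρdev.1 x).1
  have hρ1 : ∀ x, ρ x ≤ 1 := fun x => (hρdev.1 x).2
  have hPL0 := PL_nonneg hyp hPL
  have hPL1 := PL_le_one hyp hPL
  have hG0 : 0 ≤ G := bsup_nonneg fun x _ =>
    mul_nonneg (hρ0 x) (bsup_nonneg fun _ _ => hPL0 _ _)
  have hF0 : 0 < F := hG0.trans_lt hcon
  have hρm : ∀ x y, ρ x * PL x y ≤ ρ y := fun x y =>
    le_of_tendsto' ((hPL x y).const_mul (ρ x)) fun t =>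
      rho_mul_td hyp hκ hκLD hP hinv hρdev hφ hρ x y t
  -- the potential
  set g : S → ℝ := maxFluxPt PL ρ A'' with hg
  have hg0 : ∀ x, 0 ≤ g x := fun x => bsup_nonneg fun a _ => mul_nonneg (hρ0 a) (hPL0 _ _)
  have hg1 : ∀ x, g x ≤ 1 := fun x => bsup_le zero_le_one fun a _ =>
    mul_le_one₀ (hρ1 a) (hPL0 _ _) (hPL1 _ _)
  have hgle : ∀ a ∈ A'', ∀ x, ρ a * PL a x ≤ g x := fun a ha x =>
    le_bsup (f := fun a => ρ a * PL a x) zero_le_one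
      (fun a _ => mul_le_one₀ (hρ1 a) (hPL0 _ _) (hPL1 _ _)) ha
  have hgtd : ∀ x t y, g x * transDen Px x t y ≤ g y := fun x t y =>
    bsup_mul_le (td_nonneg hyp _ _ _) (hg0 y) fun a ha => by
      rw [mul_assoc]
      exact (mul_le_mul_of_nonneg_left (PL_mul_td hyp hPL _ _ _ _) (hρ0 a)).trans (hgle a ha y)
  have hgPL : ∀ x y, g x * PL x y ≤ g y := fun x y =>
    le_of_tendsto' ((hPL x y).const_mul (g x)) fun t => hgtd x t y
  have hgA' : ∀ b ∈ A', g b ≤ G := fun b hb => bsup_le hG0 fun a ha =>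
    flux_ge hyp hPL hρdev ha hb
  have hgc : Continuous g := by
    rw [Metric.continuous_iff]
    intro x e he
    obtain ⟨δ, hδ, t₀, t₁, h⟩ := hyp.localMove x (e / 2) (by linarith)
    refine ⟨δ, hδ, fun x' hx' => ?_⟩
    rw [dist_comm] at hx'
    obtain ⟨h1, h2⟩ := h x' hx'
    have h3 := hgtd x t₀ x'
    have h4 := hgtd x' t₁ x
    rw [Real.dist_eq, abs_lt]
    constructor <;> nlinarith [hg0 x, hg0 x', hg1 x, hg1 x']
  -- constants
  set c := (F + G) / 2 with hc
  have hc0 : 0 < c := by linarith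
  have hcF : c < F := by linarith
  have hGc : G < c := by linarith
  have hcc : F * G < c ^ 2 := by
    rw [hc]; nlinarith [mul_pos (sub_pos.2 hcon) (sub_pos.2 hcon)]
  set η := (c ^ 2 - F * G) / (4 * c ^ 2) with hη
  have hη0 : 0 < η := div_pos (by linarith) (by positivity)
  have hηc : η * (4 * c ^ 2) = c ^ 2 - F * G := div_mul_cancel₀ _ (by positivity)
  have hη1 : η < 1 := by
    rw [hη, div_lt_one (by positivity)]; nlinarith
  have hkey : F * G < c ^ 2 * (1 - η) ^ 2 := by nlinarith [sq_nonneg (η * c)]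
  have hkey1 : G < c * (1 - η) := by
    by_contra hh
    push Not at hh
    have h1 : c * (1 - η) * (c * (1 - η)) ≤ G * F :=
      mul_le_mul hh (by nlinarith) (mul_nonneg hc0.le (by linarith)) hG0
    nlinarith
  obtain ⟨a', ha', a'', ha'', hL⟩ := flux_le hρdev hc0.le hcF
  set L := ρ a' * PL a' a'' with hLdef
  set c₀ := c + (L - c) / 4 with hc₀
  have hc₀c : c < c₀ := by linarith
  set ε := (c₀ - c) / (4 * c₀) with hε
  have hε0 : 0 < ε := div_pos (by linarith) (by linarith)
  have hεc : ε * (4 * c₀) = c₀ - c := div_mul_cancel₀ _ (by linarith)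
  have hε1 : ε < 1 := by
    rw [hε, div_lt_one (by linarith)]; linarith
  have hεkey : c < c₀ * (1 - ε) ^ 2 := by nlinarith [sq_nonneg ε]
  obtain ⟨T, hT⟩ := through hyp hPL {z | c₀ ≤ ρ z} (rho_closed hρdev (by linarith)) c₀
    (by linarith) ε hε0 hε1
  -- upper bound for the flux into the complement
  have hup : ∀ t ≥ T, ∀ x ∈ {x | c ≤ g x}, ∀ y ∈ {y | g y ≤ c},
      ρ x * transDen Px x t y ≤ c₀ := by
    intro t ht x hx y hy
    by_contra hn
    push Not at hn
    have hx : c ≤ g x := hx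
    have hy : g y ≤ c := hy
    obtain ⟨X, hXt, hX⟩ := td_path (hρ0 x) (by linarith) hn
    have hX0 := Px_nonneg hyp x X
    have hX1 := Px_le_one hyp x X
    have hxc : c₀ ≤ ρ x := by nlinarith [hρ0 x]
    have hXc : c₀ ≤ Px x X := by nlinarith [hρ1 x]
    obtain ⟨b, hb, hbX⟩ := hT t ht x hxc X hXc
    rw [hXt] at hbX
    have hthru : c < ρ x * PL x b * PL b y := by
      calc c < c₀ * (1 - ε) ^ 2 := hεkey
        _ ≤ (ρ x * Px x X) * (1 - ε) ^ 2 := by gcongr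
        _ = ρ x * (Px x X * (1 - ε) ^ 2) := by ring
        _ ≤ ρ x * (PL x b * PL b y) := mul_le_mul_of_nonneg_left hbX (hρ0 x)
        _ = _ := by ring
    rw [← hA] at hb
    rcases hb with hb | hb
    swap
    · have h1 : ρ x * PL x b * PL b y ≤ ρ b * PL b y :=
        mul_le_mul_of_nonneg_right (hρm x b) (hPL0 _ _)
      linarith [hgle b hb y]
    · have hxb : c < ρ x * PL x b := hthru.trans_le
        (mul_le_of_le_one_right (mul_nonneg (hρ0 x) (hPL0 _ _)) (hPL1 _ _))
      have hgb := hgA' b hb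
      have hgxb := hgPL x b
      obtain ⟨a, ha, hxa⟩ := to_A hyp hPL x hη0 hη1
      have hη' : 0 < 1 - η := by linarith
      rw [← hA] at ha
      rcases ha with ha | ha
      · have h1 : c * (1 - η) ≤ g x * PL x a := mul_le_mul hx hxa hη'.le (hg0 x)
        linarith [hgPL x a, hgA' a ha]
      · obtain ⟨b', hb', hρb'⟩ := rho_from hyp hPL hκ hκLD hP hinv hρdev hφ hρ hρm x
          (by linarith) hη0 hη1
        rw [← hA] at hb'
        rcases hb' with hb' | hb'
        · have h1 : ρ x * (1 - η) * (1 - η) ≤ F := by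
            calc ρ x * (1 - η) * (1 - η) ≤ (ρ b' * PL b' x) * PL x a :=
                  mul_le_mul hρb' hxa hη'.le (mul_nonneg (hρ0 _) (hPL0 _ _))
              _ = ρ b' * (PL b' x * PL x a) := by ring
              _ ≤ ρ b' * PL b' a := mul_le_mul_of_nonneg_left (PL_mul hyp hPL _ _ _) (hρ0 _)
              _ ≤ F := flux_ge hyp hPL hρdev hb' ha
          have h2 : c * (1 - η) ^ 2 ≤ F * PL x b := by
            calc c * (1 - η) ^ 2 ≤ (ρ x * PL x b) * (1 - η) ^ 2 := by gcongr
              _ = (ρ x * (1 - η) * (1 - η)) * PL x b := by ring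
              _ ≤ F * PL x b := mul_le_mul_of_nonneg_right h1 (hPL0 _ _)
          have h3 : c * PL x b ≤ G :=
            (mul_le_mul_of_nonneg_right hx (hPL0 _ _)).trans (hgxb.trans hgb)
          have h4 : c ^ 2 * (1 - η) ^ 2 ≤ F * G := by
            calc c ^ 2 * (1 - η) ^ 2 = c * (c * (1 - η) ^ 2) := by ring
              _ ≤ c * (F * PL x b) := by gcongr
              _ = F * (c * PL x b) := by ring
              _ ≤ F * G := by gcongr
          linarith
        · have h1 : ρ x * (1 - η) ≤ g x := hρb'.trans (hgle b' hb' x)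
          have h2 : ρ x * (1 - η) * PL x b ≤ g x * PL x b :=
            mul_le_mul_of_nonneg_right h1 (hPL0 _ _)
          have h3 : c * (1 - η) ≤ (ρ x * PL x b) * (1 - η) := by gcongr
          linarith
  -- choice of the time
  have hlim : ∀ᶠ t in atTop, c + 3 * (L - c) / 4 < ρ a' * transDen Px a' t a'' :=
    ((hPL a' a'').const_mul (ρ a')).eventually_const_lt (by
      show c + 3 * (L - c) / 4 < L
      linarith)
  obtain ⟨t, htl, htT⟩ := (hlim.and (eventually_ge_atTop T)).exists
  have hDcl : IsClosed {x | c ≤ g x} := isClosed_le continuous_const hgc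
  obtain ⟨M, hM⟩ := flux_upper hyp hκ hκLD hP hρdev hφ hρ t hDcl
    (isClosed_le hgc continuous_const) (θ₀ := c₀) (θ := c + (L - c) / 2) (by linarith)
    (by linarith) (hup t htT)
  have ha'D : a' ∈ {x | c ≤ g x}ᶜ := by
    intro h
    have h : c ≤ g a' := h
    linarith [hgA' a' ha']
  have ha''D : a'' ∈ {x | c < g x} := by
    show c < g a''
    have h1 := hgle a'' ha'' a''
    have h2 : 1 ≤ PL a'' a'' := by
      have := td_le_PL_left hyp hPL (a := a'') (by rw [← hA]; exact Or.inr ha'') a'' 0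
      rwa [td_self hyp (by rw [← hA]; exact Or.inr ha'')] at this
    have h3 := hρm a' a''
    nlinarith [hρ0 a'']
  have hlow := flux_lower hyp hκ hκLD hP hρdev hφ hρ t hDcl.isOpen_compl
    (isOpen_lt continuous_const hgc) ha'D ha''D (by linarith) htl
  refine rate_contra hφ (θ₀ := c + (L - c) / 2) (θ₁ := c + 3 * (L - c) / 4) (by linarith)
    (by linarith) M hlow ?_
  filter_upwards [hM] with k hk
  calc ∫⁻ z in {x | c ≤ g x}ᶜ, κ (φ k) t z {x | c < g x} ∂(P (φ k))
      ≤ ∫⁻ z in {x | c ≤ g x}ᶜ, κ (φ k) t z {x | c ≤ g x} ∂(P (φ k)) :=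
        lintegral_mono fun z => measure_mono fun w hw => le_of_lt (show c < g w from hw)
    _ = ∫⁻ z in {x | c ≤ g x}, κ (φ k) t z {x | c ≤ g x}ᶜ ∂(P (φ k)) :=
        flux_balance hκ hP hinv _ _ hDcl.measurableSet
    _ ≤ ∫⁻ z in {x | c ≤ g x}, κ (φ k) t z {y | g y ≤ c} ∂(P (φ k)) :=
        lintegral_mono fun z => measure_mono fun w hw => le_of_not_ge (show ¬ c ≤ g w from hw)
    _ ≤ _ := hk

end Meas

end Helpers

theorem stmt14
    (Px : S → C(ℝ≥0, S) → ℝ) (A : Set S) (hyp : DevSetup S Px A)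
    (PL : S → S → ℝ)
    (hPL : ∀ x y : S, Tendsto (fun t : ℝ≥0 => transDen Px x t y) atTop (𝓝 (PL x y)))
    (κ : ℕ → ℝ≥0 → ProbabilityTheory.Kernel S S)
    (hκ : ∀ n t, ProbabilityTheory.IsMarkovKernel (κ n t))
    (P : ℕ → Measure S) (hP : ∀ n, IsProbabilityMeasure (P n))
    (hinv : ∀ n (t : ℝ≥0) (Γ : Set S), MeasurableSet Γ →
      P n Γ = ∫⁻ x, κ n t x Γ ∂(P n))
    (hκLD : ∀ (t : ℝ≥0) (x : S) (xs : ℕ → S), Tendsto xs atTop (𝓝 x) →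
      LDConv (fun n => κ n t (xs n)) (fun n => n) (fun y => transDen Px x t y))
    (ρ : S → ℝ) (hρdev : IsDeviabilityDensity ρ)
    (φ : ℕ → ℕ) (hφ : StrictMono φ)
    (hρ : LDConv (fun k => P (φ k)) φ ρ) :
    ∀ A' A'' : Set S, A'.Nonempty → A''.Nonempty → Disjoint A' A'' → A' ∪ A'' = A →
      maxFlux PL ρ A' A'' = maxFlux PL ρ A'' A' := by
  intro A' A'' _ _ _ hA
  exact le_antisymm
    (main_le hyp hPL hκ hP hinv hκLD hρdev hφ hρ A' A'' hA)
    (main_le hyp hPL hκ hP hinv hκLD hρdev hφ hρ A'' A' (by rw [union_comm]; exact hA))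
end
end

section
/- (Max balance II, uniqueness) Let A be a set with at least two elements, p : A × A → (0,1], and let ρ, ρ' : A → [0,1] satisfy: sup_{a∈A} ρ(a) = sup_{a∈A} ρ'(a) = 1; the sets {a ∈ A : ρ(a) ≥ ε} and {a ∈ A : ρ'(a) ≥ ε} are finite for every ε > 0; and both ρ and ρ' satisfy the max balance equations, i.e. for σ ∈ {ρ, ρ'} and every nontrivial partition {A',A''} of A (nonempty disjoint sets with union A), sup_{a∈A'} σ(a) · sup_{a''∈A''} p(a,a'') = sup_{a∈A''} σ(a) · sup_{a'∈A'} p(a,a'). Then ρ = ρ'. -/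
open Set

noncomputable section

theorem bsup_le_s15 {A : Type*} (X : Set A) (g : A → ℝ) (c : ℝ) (hc : 0 ≤ c)
    (h : ∀ a ∈ X, g a ≤ c) : (⨆ a ∈ X, g a) ≤ c :=
  Real.iSup_le (fun a => Real.iSup_le (fun ha => h a ha) hc) hc

theorem le_bsup_s15 {A : Type*} (X : Set A) (g : A → ℝ) (c : ℝ) (hc : 0 ≤ c)
    (h : ∀ a ∈ X, g a ≤ c) (a : A) (ha : a ∈ X) : g a ≤ ⨆ a ∈ X, g a := by
  have h1 : BddAbove (range fun a => ⨆ (_ : a ∈ X), g a) := by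
    refine ⟨c, ?_⟩
    rintro _ ⟨b, rfl⟩
    exact Real.iSup_le (fun hb => h b hb) hc
  have h2 := le_ciSup h1 a
  simpa [ha] using h2

theorem stmt15_aux {A : Type*} (p : A → A → ℝ)
    (hp : ∀ a b, p a b ∈ Set.Ioc (0:ℝ) 1)
    (ρ ρ' : A → ℝ)
    (hρ01 : ∀ a, ρ a ∈ Set.Icc (0:ℝ) 1) (hρ'01 : ∀ a, ρ' a ∈ Set.Icc (0:ℝ) 1)
    (hρ'1 : (⨆ a, ρ' a) = 1)
    (hfin' : ∀ ε : ℝ, 0 < ε → {a | ε ≤ ρ' a}.Finite)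
    (hbal : ∀ σ ∈ ({ρ, ρ'} : Set (A → ℝ)), ∀ A' A'' : Set A,
      A'.Nonempty → A''.Nonempty → Disjoint A' A'' → A' ∪ A'' = Set.univ →
      (⨆ a ∈ A', σ a * ⨆ b ∈ A'', p a b) = ⨆ a ∈ A'', σ a * ⨆ b ∈ A', p a b)
    (x : A) : ρ x ≤ ρ' x := by
  by_contra! hx
  obtain ⟨b, hb⟩ : ∃ b, ρ' b = 1 := by
    by_contra! hne
    have hlt : ∀ a, ρ' a < 1 := fun a => lt_of_le_of_ne (hρ'01 a).2 (hne a)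
    rcases Set.eq_empty_or_nonempty {a | (1/2:ℝ) ≤ ρ' a} with hF | hF
    · have : (⨆ a, ρ' a) ≤ 1/2 := Real.iSup_le (fun a => by
        by_contra! h
        have : a ∈ {a | (1/2:ℝ) ≤ ρ' a} := h.le
        rw [hF] at this
        exact this) (by norm_num)
      linarith
    · obtain ⟨c, hc, hmax⟩ := Set.exists_max_image _ ρ' (hfin' (1/2) (by norm_num)) hF
      have : (⨆ a, ρ' a) ≤ ρ' c := Real.iSup_le (fun a => by
        by_cases h : (1/2:ℝ) ≤ ρ' a
        · exact hmax a h
        · have : (1/2:ℝ) ≤ ρ' c := hc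
          linarith) (hρ'01 c).1
      linarith [hlt c]
  set L : Set A := {a | ρ a ≤ ρ' a} with hL
  have hbL : b ∈ L := by
    show ρ b ≤ ρ' b
    rw [hb]; exact (hρ01 b).2
  have hxL : x ∈ Lᶜ := by
    show ¬ (ρ x ≤ ρ' x)
    linarith
  have P1 : ∀ (Y : Set A) (a : A), (⨆ b ∈ Y, p a b) ≤ 1 := fun Y a =>
    bsup_le_s15 Y (p a) 1 zero_le_one (fun b _ => (hp a b).2)
  have P0 : ∀ (Y : Set A) (a : A), Y.Nonempty → 0 < ⨆ b ∈ Y, p a b := by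
    rintro Y a ⟨y, hy⟩
    exact lt_of_lt_of_le (hp a y).1
      (le_bsup_s15 Y (p a) 1 zero_le_one (fun b _ => (hp a b).2) y hy)
  have nL : L.Nonempty := ⟨b, hbL⟩
  have nLc : Lᶜ.Nonempty := ⟨x, hxL⟩
  have e := hbal ρ (by simp) L Lᶜ nL nLc disjoint_compl_right (by simp)
  have e' := hbal ρ' (by simp) L Lᶜ nL nLc disjoint_compl_right (by simp)
  have U : ∀ σ : A → ℝ, (∀ a, σ a ∈ Set.Icc (0:ℝ) 1) → ∀ X Y : Set A, Y.Nonempty → ∀ a ∈ X,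
      σ a * (⨆ b ∈ Y, p a b) ≤ ⨆ a ∈ X, σ a * ⨆ b ∈ Y, p a b := by
    intro σ hσ X Y hY a ha
    exact le_bsup_s15 X (fun a => σ a * ⨆ b ∈ Y, p a b) 1 zero_le_one
      (fun c _ => mul_le_one₀ (hσ c).2 (P0 Y c hY).le (P1 Y c)) a ha
  have hM : 0 < ⨆ a ∈ L, ρ' a * ⨆ b ∈ Lᶜ, p a b := by
    refine lt_of_lt_of_le ?_ (U ρ' hρ'01 L Lᶜ nLc b hbL)
    rw [hb, one_mul]; exact P0 _ _ nLc
  have hmM : (⨆ a ∈ L, ρ a * ⨆ b ∈ Lᶜ, p a b) ≤ ⨆ a ∈ L, ρ' a * ⨆ b ∈ Lᶜ, p a b := by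
    refine bsup_le_s15 L _ _ hM.le (fun a ha => ?_)
    exact (mul_le_mul_of_nonneg_right ha (P0 _ _ nLc).le).trans (U ρ' hρ'01 L Lᶜ nLc a ha)
  rw [e'] at hmM hM
  rw [e] at hmM
  have hU := U ρ hρ01 Lᶜ L nL
  generalize hMM : (⨆ a ∈ Lᶜ, ρ' a * ⨆ b ∈ L, p a b) = M at *
  have hlt : ∀ a ∈ Lᶜ, ρ' a * (⨆ b ∈ L, p a b) < M := by
    intro a ha
    have h1 : ρ' a < ρ a := not_le.mp ha
    exact (mul_lt_mul_of_pos_right h1 (P0 _ _ nL)).trans_le ((hU a ha).trans hmM)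
  have hsmall : ∀ a, ¬ (M/2 ≤ ρ' a) → ρ' a * (⨆ b ∈ L, p a b) ≤ M/2 := by
    intro a ha
    have := mul_le_of_le_one_right (hρ'01 a).1 (P1 L a)
    linarith
  obtain ⟨c, hcM, hc0, hc⟩ : ∃ c < M, 0 ≤ c ∧ ∀ a ∈ Lᶜ, ρ' a * (⨆ b ∈ L, p a b) ≤ c := by
    have hF : ({a | M/2 ≤ ρ' a} ∩ Lᶜ).Finite := (hfin' (M/2) (by linarith)).inter_of_left _
    rcases Set.eq_empty_or_nonempty ({a | M/2 ≤ ρ' a} ∩ Lᶜ) with h | h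
    · refine ⟨M/2, by linarith, by linarith, fun a ha => hsmall a fun h2 => ?_⟩
      have : a ∈ ({a | M/2 ≤ ρ' a} ∩ Lᶜ) := ⟨h2, ha⟩
      rw [h] at this
      exact this
    · obtain ⟨d, hd, hmax⟩ := Set.exists_max_image _ (fun a => ρ' a * (⨆ b ∈ L, p a b)) hF h
      refine ⟨max (M/2) (ρ' d * (⨆ b ∈ L, p d b)), max_lt (by linarith) (hlt d hd.2),
        le_max_of_le_left (by linarith), fun a ha => ?_⟩
      by_cases h2 : M/2 ≤ ρ' a
      · exact le_max_of_le_right (hmax a ⟨h2, ha⟩)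
      · exact le_max_of_le_left (hsmall a h2)
  have := bsup_le_s15 Lᶜ (fun a => ρ' a * ⨆ b ∈ L, p a b) c hc0 hc
  rw [hMM] at this
  linarith

theorem stmt15 {A : Type*} [Nontrivial A] (p : A → A → ℝ)
    (hp : ∀ a b, p a b ∈ Set.Ioc (0:ℝ) 1)
    (ρ ρ' : A → ℝ)
    (hρ01 : ∀ a, ρ a ∈ Set.Icc (0:ℝ) 1) (hρ'01 : ∀ a, ρ' a ∈ Set.Icc (0:ℝ) 1)
    (hρ1 : (⨆ a, ρ a) = 1) (hρ'1 : (⨆ a, ρ' a) = 1)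
    (hfin : ∀ ε : ℝ, 0 < ε → {a | ε ≤ ρ a}.Finite)
    (hfin' : ∀ ε : ℝ, 0 < ε → {a | ε ≤ ρ' a}.Finite)
    (hbal : ∀ σ ∈ ({ρ, ρ'} : Set (A → ℝ)), ∀ A' A'' : Set A,
      A'.Nonempty → A''.Nonempty → Disjoint A' A'' → A' ∪ A'' = Set.univ →
      (⨆ a ∈ A', σ a * ⨆ b ∈ A'', p a b) = ⨆ a ∈ A'', σ a * ⨆ b ∈ A', p a b) :
    ρ = ρ' := by
  exact funext fun x => le_antisymm
    (stmt15_aux p hp ρ ρ' hρ01 hρ'01 hρ'1 hfin' hbal x)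
    (stmt15_aux p hp ρ' ρ hρ'01 hρ01 hρ1 hfin (by rwa [Set.pair_comm]) x)
end
end

section
/- (Tree formula solves max balance) Let A be a finite set with at least two elements and p : A × A → (0,1]. For a ∈ A, let G_A(a) be the set of in-trees with root a on the vertex set A, i.e. directed graphs g whose edge set E(g) contains exactly one edge leaving each vertex a' ∈ A∖{a}, no edge leaving a, and such that from every vertex there is a directed path in g to a; set w(g) = ∏_{(a',a'')∈E(g)} p(a',a''), W(a) = max_{g∈G_A(a)} w(g), and ρ(a) = W(a) / max_{a'∈A} W(a'). Then max_{a∈A} ρ(a) = 1 and ρ satisfies max balance: for every nontrivial partition {A',A''} of A (nonempty disjoint sets with union A), max_{a'∈A'} ρ(a') · max_{a''∈A''} p(a',a'') = max_{a''∈A''} ρ(a'') · max_{a'∈A'} p(a'',a'). -/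
open Set

noncomputable section

/-- `g` is an in-tree with root `root` on the vertex set `A`: every vertex other than the
root has exactly one outgoing edge, the root has none, and from every vertex there is a
directed path in `g` to the root. -/
def IsInTree {A : Type*} (root : A) (g : Finset (A × A)) : Prop :=
  (∀ a' : A, a' ≠ root → ∃! e : A × A, e ∈ g ∧ e.1 = a') ∧
  (∀ e ∈ g, e.1 ≠ root) ∧
  (∀ v : A, Relation.ReflTransGen (fun u w => (u, w) ∈ g) v root)

theorem aux_le {ι : Type*} [Finite ι] (s : Set ι) (f : ι → ℝ) {i : ι} (hi : i ∈ s) :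
    f i ≤ ⨆ i ∈ s, f i := by
  refine le_ciSup_of_le (Set.finite_range _).bddAbove i ?_
  simp [hi]

theorem aux_att {ι : Type*} [Finite ι] (s : Set ι) (hs : s.Nonempty) (f : ι → ℝ)
    (hf : ∀ i, 0 ≤ f i) : ∃ i ∈ s, (⨆ i ∈ s, f i) = f i := by
  obtain ⟨i, hi, hmax⟩ := Set.exists_max_image s f s.toFinite hs
  refine ⟨i, hi, le_antisymm ?_ (aux_le s f hi)⟩
  exact Real.iSup_le (fun j => Real.iSup_le (fun hj => hmax j hj) (hf i)) (hf i)

theorem aux_cross {A : Type*} (r : A → A → Prop) (S : Set A) {b a : A}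
    (h : Relation.ReflTransGen r b a) (ha : a ∉ S) (hb : b ∈ S) :
    ∃ c d, c ∈ S ∧ d ∉ S ∧ r c d ∧
      Relation.ReflTransGen (fun u w => r u w ∧ w ∈ S) b c := by
  induction h using Relation.ReflTransGen.head_induction_on with
  | refl => exact absurd hb ha
  | head hxy hrest ih =>
    rename_i x y
    by_cases hy : y ∈ S
    · obtain ⟨c, d, hc, hd, hcd, hp⟩ := ih hy
      exact ⟨c, d, hc, hd, hcd, Relation.ReflTransGen.head ⟨hxy, hy⟩ hp⟩
    · exact ⟨x, y, hb, hy, hxy, Relation.ReflTransGen.refl⟩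

theorem aux_star {A : Type*} [Fintype A] (a : A) : ∃ g, IsInTree a g := by
  classical
  refine ⟨Finset.univ.filter (fun e : A × A => e.1 ≠ a ∧ e.2 = a), ?_, ?_, ?_⟩
  · intro v hv
    refine ⟨(v, a), by simp [hv], ?_⟩
    rintro ⟨x, y⟩ ⟨h1, h2⟩
    simp at h1 h2
    simp [h1.2, h2]
  · intro e he
    simp at he
    exact he.1
  · intro v
    by_cases hv : v = a
    · rw [hv]
    · exact Relation.ReflTransGen.single (by simp [hv])

theorem aux_exch {A : Type*} [Fintype A] (p : A → A → ℝ) (S : Set A) {a b : A}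
    (ha : a ∉ S) (hb : b ∈ S) (g : Finset (A × A)) (hg : IsInTree a g) :
    ∃ c d g', c ∈ S ∧ d ∉ S ∧ IsInTree c g' ∧
      (∏ e ∈ g, p e.1 e.2) * p a b = (∏ e ∈ g', p e.1 e.2) * p c d := by
  classical
  obtain ⟨h1, h2, h3⟩ := hg
  obtain ⟨c, d, hc, hd, hcd, hpath⟩ := aux_cross _ S (h3 b) ha hb
  have hac : a ≠ c := fun h => ha (h ▸ hc)
  have huniq : ∀ v x y, (v, x) ∈ g → (v, y) ∈ g → x = y := by
    intro v x y hx hy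
    have := (h1 v (h2 _ hx)).unique ⟨hx, rfl⟩ ⟨hy, rfl⟩
    exact (Prod.ext_iff.1 this).2
  have hab : (a, b) ∉ g := fun h => h2 _ h rfl
  refine ⟨c, d, insert (a, b) (g.erase (c, d)), hc, hd, ⟨?_, ?_, ?_⟩, ?_⟩
  · intro v hv
    by_cases hva : v = a
    · subst hva
      refine ⟨(v, b), by simp, ?_⟩
      rintro e ⟨he, hev⟩
      rcases Finset.mem_insert.1 he with h | h
      · exact h
      · exact absurd hev (h2 _ (Finset.mem_of_mem_erase h))
    · obtain ⟨e, ⟨he, hev⟩, hu⟩ := h1 v hva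
      refine ⟨e, ⟨?_, hev⟩, ?_⟩
      · refine Finset.mem_insert_of_mem (Finset.mem_erase.2 ⟨?_, he⟩)
        rintro rfl
        exact hv hev.symm
      · rintro e' ⟨he', hev'⟩
        rcases Finset.mem_insert.1 he' with h | h
        · subst h
          exact absurd hev'.symm hva
        · exact hu _ ⟨Finset.mem_of_mem_erase h, hev'⟩
  · intro e he hec
    rcases Finset.mem_insert.1 he with h | h
    · subst h
      exact hac hec
    · obtain ⟨hne, hm⟩ := Finset.mem_erase.1 h
      obtain ⟨x, y⟩ := e
      simp only at hec
      subst hec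
      exact hne (by rw [huniq _ _ _ hm hcd])
  · have hbc : Relation.ReflTransGen
        (fun u w => (u, w) ∈ insert (a, b) (g.erase (c, d))) b c := by
      refine Relation.ReflTransGen.mono ?_ _ _ hpath
      rintro u w ⟨huw, hw⟩
      refine Finset.mem_insert_of_mem (Finset.mem_erase.2 ⟨?_, huw⟩)
      intro h
      have h' : w = d := (Prod.ext_iff.1 h).2
      exact hd (h' ▸ hw)
    intro v
    induction h3 v using Relation.ReflTransGen.head_induction_on with
    | refl => exact Relation.ReflTransGen.head (Finset.mem_insert_self _ _) hbc
    | head hxy hrest ih =>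
      rename_i x y
      by_cases hx : x = c
      · rw [hx]
      · refine Relation.ReflTransGen.head ?_ ih
        refine Finset.mem_insert_of_mem (Finset.mem_erase.2 ⟨?_, hxy⟩)
        intro h
        exact hx (Prod.ext_iff.1 h).1
  · rw [Finset.prod_insert (fun h => hab (Finset.mem_of_mem_erase h)),
      ← Finset.mul_prod_erase g _ hcd]
    ring

theorem stmt16 {A : Type*} [Fintype A] [Nontrivial A]
    (p : A → A → ℝ) (hp : ∀ a b, p a b ∈ Set.Ioc (0:ℝ) 1)
    (W : A → ℝ)
    (hW : ∀ a : A, W a = ⨆ g ∈ {g : Finset (A × A) | IsInTree a g}, ∏ e ∈ g, p e.1 e.2)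
    (ρ : A → ℝ) (hρ : ∀ a : A, ρ a = W a / ⨆ a' : A, W a') :
    (⨆ a : A, ρ a) = 1 ∧
    ∀ A' A'' : Set A, A'.Nonempty → A''.Nonempty → Disjoint A' A'' → A' ∪ A'' = Set.univ →
      (⨆ a ∈ A', ρ a * ⨆ b ∈ A'', p a b) = ⨆ a ∈ A'', ρ a * ⨆ b ∈ A', p a b := by
  have hw : ∀ g : Finset (A × A), 0 < ∏ e ∈ g, p e.1 e.2 :=
    fun g => Finset.prod_pos (fun e _ => (hp e.1 e.2).1)
  have hatt : ∀ a, ∃ g, IsInTree a g ∧ W a = ∏ e ∈ g, p e.1 e.2 := by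
    intro a
    obtain ⟨g, hg, h⟩ := aux_att {g : Finset (A × A) | IsInTree a g} (aux_star a)
      (fun g => ∏ e ∈ g, p e.1 e.2) (fun g => (hw g).le)
    exact ⟨g, hg, (hW a).trans h⟩
  have hle : ∀ a g, IsInTree a g → ∏ e ∈ g, p e.1 e.2 ≤ W a := by
    intro a g hg
    rw [hW a]
    exact aux_le {g : Finset (A × A) | IsInTree a g} (fun g => ∏ e ∈ g, p e.1 e.2) hg
  have hWpos : ∀ a, 0 < W a := by
    intro a
    obtain ⟨g, _, h⟩ := hatt a
    rw [h]
    exact hw g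
  obtain ⟨m, hm⟩ := exists_eq_ciSup_of_finite (f := W)
  have hM : ∀ a, W a ≤ ⨆ a', W a' := fun a => le_ciSup (Set.finite_range W).bddAbove a
  set M := ⨆ a', W a' with hMdef
  have hMpos : 0 < M := hm ▸ hWpos m
  have hρpos : ∀ a, 0 < ρ a := fun a => by
    rw [hρ a]
    exact div_pos (hWpos a) hMpos
  refine ⟨le_antisymm (ciSup_le fun a => ?_) ?_, ?_⟩
  · rw [hρ a]
    exact (div_le_one hMpos).2 (hM a)
  · refine le_ciSup_of_le (Set.finite_range ρ).bddAbove m ?_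
    rw [hρ m, hm, div_self hMpos.ne']
  have key : ∀ A' A'' : Set A, A''.Nonempty → Disjoint A' A'' → A' ∪ A'' = Set.univ →
      (⨆ a ∈ A', ρ a * ⨆ b ∈ A'', p a b) ≤ ⨆ a ∈ A'', ρ a * ⨆ b ∈ A', p a b := by
    intro S T hT hd hu
    have h0 : 0 ≤ ⨆ a ∈ T, ρ a * ⨆ b ∈ S, p a b :=
      Real.iSup_nonneg fun a => Real.iSup_nonneg fun _ => mul_nonneg (hρpos a).le
        (Real.iSup_nonneg fun b => Real.iSup_nonneg fun _ => (hp a b).1.le)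
    refine Real.iSup_le (fun a => Real.iSup_le (fun ha => ?_) h0) h0
    obtain ⟨b, hb, hbe⟩ := aux_att T hT (p a) (fun b => (hp a b).1.le)
    rw [hbe]
    obtain ⟨g, hg, hga⟩ := hatt a
    obtain ⟨c, d, g', hc, hdT, hg', he⟩ :=
      aux_exch p T (Set.disjoint_left.1 hd ha) hb g hg
    have hdS : d ∈ S := by
      have : d ∈ S ∪ T := hu ▸ Set.mem_univ d
      exact this.resolve_right hdT
    refine le_trans ?_ (aux_le T (fun a => ρ a * ⨆ b ∈ S, p a b) hc)
    calc ρ a * p a b = (∏ e ∈ g', p e.1 e.2) / M * p c d := by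
          rw [hρ a, hga, div_mul_eq_mul_div, he, div_mul_eq_mul_div]
      _ ≤ ρ c * p c d := by
          rw [hρ c]
          exact mul_le_mul_of_nonneg_right
            (div_le_div_of_nonneg_right (hle c g' hg') hMpos.le) (hp c d).1.le
      _ ≤ ρ c * ⨆ b ∈ S, p c b :=
          mul_le_mul_of_nonneg_left (aux_le S (p c) hdS) (hρpos c).le
  intro S T hS hT hd hu
  exact le_antisymm (key S T hT hd hu) (key T S hS hd.symm (by rw [Set.union_comm, hu]))
end
end
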